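/- arXiv:2402.04650 — 3 statements merged into one kernel-verified Lean document; each statement's English description precedes it below -/
import Mathlib

section
/- (Gaussian logarithmic Sobolev inequality.) Let σ² > 0 and let p : ℝ^d → (0, ∞) be a continuously differentiable probability density with respect to Lebesgue measure on ℝ^d. Then ∫_{ℝ^d} p(x) log(p(x)/φ_{σ²}(x)) dx ≤ (σ²/2) ∫_{ℝ^d} ‖∇ log p(x) + x/σ²‖² p(x) dx, i.e. the Kullback–Leibler divergence of the measure with density p from γ_{σ²} is bounded by (σ²/2) times its relative Fisher information, the inequality holding in [0, ∞]. -/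
open MeasureTheory Real Set
open scoped ENNReal Classical

noncomputable section

/-- Density of the Gaussian measure `N(0, σ² I_d)` on `ℝ^d` (here `σ2 = σ²`). -/
def gaussDensity (d : ℕ) (σ2 : ℝ) (x : EuclideanSpace ℝ (Fin d)) : ℝ :=
  (2 * π * σ2) ^ (-(d : ℝ) / 2) * Real.exp (-‖x‖ ^ 2 / (2 * σ2))

/-- The Gaussian measure `γ_{σ²} = N(0, σ² I_d)` on `ℝ^d`. -/
def gaussMeasure (d : ℕ) (σ2 : ℝ) : Measure (EuclideanSpace ℝ (Fin d)) :=
  volume.withDensity fun x => ENNReal.ofReal (gaussDensity d σ2 x)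

/-- Kullback–Leibler divergence `KL(μ‖ν) ∈ [0,∞]`. -/
def KL {E : Type*} [MeasurableSpace E] (μ ν : Measure E) : ℝ≥0∞ :=
  if μ ≪ ν ∧ Integrable (fun x => Real.log (μ.rnDeriv ν x).toReal) μ then
    ENNReal.ofReal (∫ x, Real.log (μ.rnDeriv ν x).toReal ∂μ)
  else ⊤

/-!
Let `Q_θ f (x) = ∫ f (cos θ x + sin θ y) dμ(y)` be the Mehler operator of a centred Gaussian
measure `μ` with covariance form `B`. Rotation invariance of `μ ⊗ μ` gives the integration by parts
`∫ h L dμ = ∫ B(h', L) dμ`, and hence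
`d/dθ ∫ klFun (Q_θ f) dμ = -sin θ cos θ ∫ B(Q_θ f', Q_θ f') / Q_θ f dμ`.
By Jensen's inequality for the perspective `(t, u) ↦ B(u, u) / t` the last integral is at most the
Fisher information `∫ B(f', f') / f dμ`, and integrating over `θ ∈ [0, π / 2]`, from `Q_0 f = f` to
the constant `Q_{π/2} f = ∫ f dμ`, yields the inequality with constant
`∫₀^{π/2} sin θ cos θ dθ = 1 / 2`. This applies to `f` bounded and bounded away from zero, with
bounded derivative; truncation and Fatou's lemma give the general case.
-/

open Filter ProbabilityTheory InformationTheory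
open scoped Topology

section Mehler

variable {E F : Type*} [NormedAddCommGroup E] [NormedSpace ℝ E] [NormedAddCommGroup F]
  [NormedSpace ℝ F]

lemma hasFDerivAt_comp_smul_add {f : E → F} (hf : Differentiable ℝ f) (c : ℝ) (v x : E) :
    HasFDerivAt (fun x => f (c • x + v)) (c • fderiv ℝ f (c • x + v)) x := by
  have haffine : HasFDerivAt (fun x : E => c • x + v) (c • ContinuousLinearMap.id ℝ E) x :=
    ((hasFDerivAt_id x).const_smul c).add_const v
  convert! (hf _).hasFDerivAt.comp x haffine using 1
  simp only [ContinuousLinearMap.comp_smul, ContinuousLinearMap.comp_id]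

lemma hasDerivAt_comp_rotation {f : E → F} (hf : Differentiable ℝ f) (x y : E) (θ : ℝ) :
    HasDerivAt (fun θ => f (cos θ • x + sin θ • y))
      (fderiv ℝ f (cos θ • x + sin θ • y) (-sin θ • x + cos θ • y)) θ :=
  (hf _).hasFDerivAt.comp_hasDerivAt θ
    (((hasDerivAt_cos θ).smul_const x).add ((hasDerivAt_sin θ).smul_const y))

/-- Real functions of class `C¹` that are bounded together with their derivative. -/
structure IsBoundedC1 (f : E → ℝ) : Prop where
  contDiff : ContDiff ℝ 1 f
  bounded : ∃ C, ∀ x, ‖f x‖ ≤ C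
  bounded_fderiv : ∃ L, ∀ x, ‖fderiv ℝ f x‖ ≤ L

namespace IsBoundedC1

variable {f : E → ℝ}

lemma continuous (hf : IsBoundedC1 f) : Continuous f := hf.contDiff.continuous

lemma continuous_fderiv (hf : IsBoundedC1 f) : Continuous (fderiv ℝ f) :=
  hf.contDiff.continuous_fderiv one_ne_zero

lemma differentiable (hf : IsBoundedC1 f) : Differentiable ℝ f :=
  hf.contDiff.differentiable one_ne_zero

protected lemma log (hf : IsBoundedC1 f) {a : ℝ} (ha : 0 < a) (hfa : ∀ x, a ≤ f x) :
    IsBoundedC1 fun x => log (f x) := by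
  have hpos x : 0 < f x := ha.trans_le (hfa x)
  obtain ⟨C, hC⟩ := hf.bounded
  obtain ⟨L, hL⟩ := hf.bounded_fderiv
  refine ⟨hf.contDiff.log fun x => (hpos x).ne', ⟨max |Real.log a| |Real.log C|, fun x => ?_⟩,
    ⟨a⁻¹ * L, fun x => ?_⟩⟩
  · exact abs_le_max_abs_abs (log_le_log ha (hfa x))
      (log_le_log (hpos x) ((le_abs_self _).trans (hC x)))
  · rw [fderiv.log (hf.differentiable x) (hpos x).ne', norm_smul,
      norm_of_nonneg (inv_pos.2 (hpos x)).le]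
    exact mul_le_mul (inv_anti₀ ha (hfa x)) (hL x) (norm_nonneg _) (inv_pos.2 ha).le

lemma comp_smul_add (hf : IsBoundedC1 f) (c : ℝ) (v : E) :
    IsBoundedC1 fun x => f (c • x + v) := by
  obtain ⟨C, hC⟩ := hf.bounded
  obtain ⟨L, hL⟩ := hf.bounded_fderiv
  refine ⟨hf.contDiff.comp (by fun_prop), ⟨C, fun x => hC _⟩, ⟨|c| * L, fun x => ?_⟩⟩
  rw [(hasFDerivAt_comp_smul_add hf.differentiable c v x).fderiv, norm_smul, norm_eq_abs]
  exact mul_le_mul_of_nonneg_left (hL _) (abs_nonneg c)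

end IsBoundedC1

lemma norm_apply_rotation_snd_le {A : E →L[ℝ] F} {L : ℝ} (hA : ‖A‖ ≤ L) (x y : E) (θ : ℝ) :
    ‖A (-sin θ • x + cos θ • y)‖ ≤ L * (‖x‖ + ‖y‖) := by
  refine A.le_of_opNorm_le_of_le hA ?_
  calc ‖-sin θ • x + cos θ • y‖ ≤ |sin θ| * ‖x‖ + |cos θ| * ‖y‖ := by
        simpa [norm_smul] using norm_add_le (-sin θ • x) (cos θ • y)
    _ ≤ 1 * ‖x‖ + 1 * ‖y‖ := by gcongr; exacts [abs_sin_le_one θ, abs_cos_le_one θ]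
    _ = ‖x‖ + ‖y‖ := by ring

variable [MeasurableSpace E]

/-- The Mehler (Ornstein–Uhlenbeck) operator of `μ`, parametrised by an angle: `θ` corresponds to
the time `-log (cos θ)` of the semigroup, so that `θ = 0` gives the identity and `θ = π / 2` the
mean with respect to `μ`. -/
def mehler (μ : Measure E) (θ : ℝ) (f : E → F) (x : E) : F :=
  ∫ y, f (cos θ • x + sin θ • y) ∂μ

variable {μ : Measure E} {θ : ℝ}

@[simp]
lemma mehler_pi_div_two (f : E → F) (x : E) : mehler μ (π / 2) f x = ∫ y, f y ∂μ := by
  simp [mehler]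

variable [IsProbabilityMeasure μ]

@[simp]
lemma mehler_zero [CompleteSpace F] (f : E → F) : mehler μ 0 f = f := by
  ext x
  simp [mehler]

lemma norm_mehler_le {f : E → F} {C : ℝ} (hC : ∀ x, ‖f x‖ ≤ C) (x : E) :
    ‖mehler μ θ f x‖ ≤ C := by
  simpa [mehler] using norm_integral_le_of_norm_le_const (μ := μ) (ae_of_all μ fun _ => hC _)

variable [BorelSpace E] [SecondCountableTopology E]

omit [NormedSpace ℝ E] [NormedSpace ℝ F] in
lemma integrable_of_continuous_of_norm_le {f : E → F} (hf : Continuous f) {C : ℝ}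
    (hC : ∀ x, ‖f x‖ ≤ C) : Integrable f μ :=
  .of_bound hf.aestronglyMeasurable C (ae_of_all μ hC)

lemma continuous_mehler {f : E → F} (hf : Continuous f) {C : ℝ} (hC : ∀ x, ‖f x‖ ≤ C) :
    Continuous (mehler μ θ f) :=
  continuous_of_dominated (fun _ => Continuous.aestronglyMeasurable (by fun_prop))
    (fun _ => ae_of_all μ fun _ => hC _) (integrable_const C)
    (ae_of_all μ fun _ => by fun_prop)

lemma mehler_mem_Icc {f : E → ℝ} (hf : Continuous f) {a b : ℝ} (hab : ∀ x, f x ∈ Icc a b) (x : E) :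
    mehler μ θ f x ∈ Icc a b :=
  (convex_Icc a b).integral_mem isClosed_Icc (ae_of_all μ fun _ => hab _)
    (integrable_of_continuous_of_norm_le (f := fun y => f (cos θ • x + sin θ • y)) (by fun_prop)
      fun _ => abs_le_max_abs_abs (hab _).1 (hab _).2)

namespace IsBoundedC1

variable {f : E → ℝ} (hf : IsBoundedC1 f)
include hf

lemma hasFDerivAt_mehler (x : E) :
    HasFDerivAt (mehler μ θ f) (cos θ • mehler μ θ (fderiv ℝ f) x) x := by
  obtain ⟨C, hC⟩ := hf.bounded
  obtain ⟨L, hL⟩ := hf.bounded_fderiv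
  have hf_cont := hf.continuous
  have hf'_cont := hf.continuous_fderiv
  unfold mehler
  rw [← integral_smul]
  refine hasFDerivAt_integral_of_dominated_of_fderiv_le (bound := fun _ => |cos θ| * L) univ_mem
    (Eventually.of_forall fun _ => Continuous.aestronglyMeasurable (by fun_prop))
    (integrable_of_continuous_of_norm_le (by fun_prop) fun _ => hC _)
    ((integrable_of_continuous_of_norm_le (f := fun y => fderiv ℝ f (cos θ • x + sin θ • y))
      (by fun_prop) fun _ => hL _).smul (cos θ)).aestronglyMeasurable
    (ae_of_all μ fun y x _ => ?_) (integrable_const _)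
    (ae_of_all μ fun y x _ => hasFDerivAt_comp_smul_add hf.differentiable (cos θ) (sin θ • y) x)
  rw [norm_smul, norm_eq_abs]
  exact mul_le_mul_of_nonneg_left (hL _) (abs_nonneg _)

lemma fderiv_mehler (x : E) :
    fderiv ℝ (mehler μ θ f) x = cos θ • mehler μ θ (fderiv ℝ f) x :=
  (hf.hasFDerivAt_mehler x).fderiv

protected lemma mehler (θ : ℝ) : IsBoundedC1 (mehler μ θ f) := by
  obtain ⟨C, hC⟩ := hf.bounded
  obtain ⟨L, hL⟩ := hf.bounded_fderiv
  have hderiv := hf.hasFDerivAt_mehler (μ := μ) (θ := θ)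
  have hcont := continuous_mehler (μ := μ) (θ := θ) hf.continuous_fderiv hL
  refine ⟨contDiff_one_iff_hasFDerivAt.2 ⟨_, hcont.const_smul (cos θ), hderiv⟩,
    ⟨C, norm_mehler_le hC⟩, ⟨|cos θ| * L, fun x => ?_⟩⟩
  rw [hf.fderiv_mehler, norm_smul, norm_eq_abs]
  exact mul_le_mul_of_nonneg_left (norm_mehler_le hL x) (abs_nonneg _)

lemma hasDerivAt_mehler_angle (hμ : Integrable id μ) (x : E) (θ : ℝ) :
    HasDerivAt (fun θ => mehler μ θ f x)
      (∫ y, fderiv ℝ f (cos θ • x + sin θ • y) (-sin θ • x + cos θ • y) ∂μ) θ := by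
  obtain ⟨C, hC⟩ := hf.bounded
  obtain ⟨L, hL⟩ := hf.bounded_fderiv
  have hf_cont := hf.continuous
  have hf'_cont := hf.continuous_fderiv
  refine (hasDerivAt_integral_of_dominated_loc_of_deriv_le
    (F := fun θ y => f (cos θ • x + sin θ • y))
    (F' := fun θ y => fderiv ℝ f (cos θ • x + sin θ • y) (-sin θ • x + cos θ • y))
    (bound := fun y => L * (‖x‖ + ‖y‖)) univ_mem
    (Eventually.of_forall fun _ => Continuous.aestronglyMeasurable (by fun_prop))
    (integrable_of_continuous_of_norm_le (by fun_prop) fun _ => hC _)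
    (Continuous.aestronglyMeasurable (by fun_prop))
    (ae_of_all μ fun y θ _ => norm_apply_rotation_snd_le (hL _) x y θ)
    (((integrable_const _).add hμ.norm).const_mul L)
    (ae_of_all μ fun y θ _ => hasDerivAt_comp_rotation hf.differentiable x y θ)).2

lemma stronglyMeasurable_integral_fderiv_rotation (θ : ℝ) :
    StronglyMeasurable fun x =>
      ∫ y, fderiv ℝ f (cos θ • x + sin θ • y) (-sin θ • x + cos θ • y) ∂μ := by
  have hf'_cont := hf.continuous_fderiv
  exact StronglyMeasurable.integral_prod_right' (f := fun z : E × E =>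
    fderiv ℝ f (cos θ • z.1 + sin θ • z.2) (-sin θ • z.1 + cos θ • z.2))
    (Continuous.stronglyMeasurable (by fun_prop))

end IsBoundedC1

omit [BorelSpace E] [SecondCountableTopology E] in
lemma norm_integral_fderiv_rotation_le {f : E → F} {L : ℝ} (hμ : Integrable id μ)
    (hL : ∀ x, ‖fderiv ℝ f x‖ ≤ L) (x : E) (θ : ℝ) :
    ‖∫ y, fderiv ℝ f (cos θ • x + sin θ • y) (-sin θ • x + cos θ • y) ∂μ‖ ≤
      ∫ y, L * (‖x‖ + ‖y‖) ∂μ :=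
  norm_integral_le_of_norm_le (((integrable_const _).add hμ.norm).const_mul L)
    (ae_of_all μ fun y => norm_apply_rotation_snd_le (hL _) x y θ)

end Mehler

section IntegrationByParts

lemma neg_sin_smul_add_cos_smul_rotation {V : Type*} [AddCommGroup V] [Module ℝ V] (θ : ℝ)
    (x y : V) :
    -sin θ • (-sin θ • x + cos θ • y) + cos θ • (cos θ • x + sin θ • y) = x := by
  calc _ = (sin θ ^ 2 + cos θ ^ 2) • x := by module
    _ = x := by rw [sin_sq_add_cos_sq, one_smul]

variable {E F : Type*} [NormedAddCommGroup E] [NormedSpace ℝ E] [MeasurableSpace E] [BorelSpace E]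
  [SecondCountableTopology E] [CompleteSpace E] [NormedAddCommGroup F] [NormedSpace ℝ F]
  {μ : Measure E} [IsGaussian μ] (hμ : μ[id] = 0)
include hμ

lemma measurePreserving_rotation (θ : ℝ) :
    MeasurePreserving (ContinuousLinearMap.rotation (E := E) θ) (μ.prod μ) (μ.prod μ) :=
  ⟨by fun_prop, IsGaussian.map_rotation_eq_self hμ θ⟩

lemma integral_comp_rotation {f : E × E → F} (hf : AEStronglyMeasurable f (μ.prod μ)) (θ : ℝ) :
    ∫ z, f (ContinuousLinearMap.rotation θ z) ∂(μ.prod μ) = ∫ z, f z ∂(μ.prod μ) := by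
  have hrot := measurePreserving_rotation hμ θ
  rw [← integral_map hrot.aemeasurable (by rwa [hrot.map_eq]), hrot.map_eq]

lemma integral_integral_comp_rotation {f : E × E → F} (hf : Integrable f (μ.prod μ)) (θ : ℝ) :
    ∫ x, ∫ y, f (ContinuousLinearMap.rotation θ (x, y)) ∂μ ∂μ = ∫ x, ∫ y, f (x, y) ∂μ ∂μ := by
  have hf_rot : Integrable (fun z => f (ContinuousLinearMap.rotation θ z)) (μ.prod μ) :=
    (measurePreserving_rotation hμ θ).integrable_comp_of_integrable hf
  rw [← integral_prod _ hf_rot, integral_comp_rotation hμ hf.1, integral_prod _ hf]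

lemma integral_mehler {f : E → F} (hf : Continuous f) {C : ℝ} (hC : ∀ x, ‖f x‖ ≤ C) (θ : ℝ) :
    ∫ x, mehler μ θ f x ∂μ = ∫ x, f x ∂μ := by
  have hint : Integrable f μ := integrable_of_continuous_of_norm_le hf hC
  have hcomp : Integrable (fun z : E × E => f (cos θ • z.1 + sin θ • z.2)) (μ.prod μ) :=
    integrable_of_continuous_of_norm_le (by fun_prop) fun _ => hC _
  calc ∫ x, mehler μ θ f x ∂μ
      = ∫ z, f (ContinuousLinearMap.rotation θ z).1 ∂(μ.prod μ) := (integral_prod _ hcomp).symm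
    _ = ∫ z, f z.1 ∂(μ.prod μ) :=
        integral_comp_rotation hμ (f := fun z => f z.1) hint.1.comp_fst θ
    _ = ∫ x, f x ∂μ := by simp [integral_fun_fst]

lemma covarianceBilinDual_apply_of_integral_eq_zero (L₁ L₂ : StrongDual ℝ E) :
    covarianceBilinDual μ L₁ L₂ = ∫ x, L₁ x * L₂ x ∂μ := by
  rw [covarianceBilinDual_apply' IsGaussian.memLp_two_id, hμ]
  simp

omit [SecondCountableTopology E] [CompleteSpace E] [IsGaussian μ] in
lemma norm_covarianceBilinDual_le (L₁ L₂ : StrongDual ℝ E) :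
    ‖covarianceBilinDual μ L₁ L₂‖ ≤ ‖L₁‖ * ‖L₂‖ * ∫ x, ‖x‖ ^ 2 ∂μ := by
  rw [covarianceBilinDual, show ∫ x, x ∂μ = 0 from hμ]
  simpa using norm_uncenteredCovarianceBilinDual_le L₁ L₂

lemma integral_comp_rotation_mul_dual {h : E → ℝ} (hh : IsBoundedC1 h) (L : StrongDual ℝ E)
    (θ : ℝ) :
    ∫ z : E × E, h (cos θ • z.1 + sin θ • z.2) * L z.2 ∂(μ.prod μ) =
      sin θ * ∫ x, h x * L x ∂μ := by
  obtain ⟨C, hC⟩ := hh.bounded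
  have hh_cont := hh.continuous
  have hL_int : Integrable L μ := L.integrable_comp IsGaussian.integrable_id
  have hh_int : Integrable h μ := integrable_of_continuous_of_norm_le hh_cont hC
  have hhL_int : Integrable (fun x => h x * L x) μ :=
    hL_int.bdd_mul hh_cont.aestronglyMeasurable (ae_of_all _ hC)
  have hL_zero : ∫ x, L x ∂μ = 0 := by
    rw [IsGaussian.integral_dual, show ∫ x, x ∂μ = 0 from hμ, map_zero]
  have hrot (z : E × E) : h (cos θ • z.1 + sin θ • z.2) * L z.2 =
      h (ContinuousLinearMap.rotation θ z).1 * L (sin θ • (ContinuousLinearMap.rotation θ z).1 +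
        cos θ • (ContinuousLinearMap.rotation θ z).2) := by
    simp only [ContinuousLinearMap.rotation_apply, map_add, map_smul, smul_eq_mul]
    linear_combination (-h (cos θ • z.1 + sin θ • z.2) * L z.2) * sin_sq_add_cos_sq θ
  calc ∫ z : E × E, h (cos θ • z.1 + sin θ • z.2) * L z.2 ∂(μ.prod μ)
      = ∫ z : E × E, h z.1 * L (sin θ • z.1 + cos θ • z.2) ∂(μ.prod μ) := by
        simp_rw [hrot]
        exact integral_comp_rotation hμ
          (f := fun z : E × E => h z.1 * L (sin θ • z.1 + cos θ • z.2))
          (Continuous.aestronglyMeasurable (by fun_prop)) θ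
    _ = ∫ z : E × E, (sin θ * (h z.1 * L z.1) + cos θ * (h z.1 * L z.2)) ∂(μ.prod μ) := by
        congr with z
        simp only [map_add, map_smul, smul_eq_mul]
        ring
    _ = sin θ * ∫ x, h x * L x ∂μ := by
        rw [integral_add ((hhL_int.comp_fst μ).const_mul _)
          ((hh_int.mul_prod hL_int).const_mul _), integral_const_mul, integral_const_mul,
          integral_prod_mul, hL_zero, integral_fun_fst (fun x => h x * L x)]
        simp

/-- The derivative at `θ = 0` of `integral_comp_rotation_mul_dual`. -/
theorem integral_mul_dual_eq_integral_covariance {h : E → ℝ} (hh : IsBoundedC1 h)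
    (L : StrongDual ℝ E) :
    ∫ x, h x * L x ∂μ = ∫ x, covarianceBilinDual μ (fderiv ℝ h x) L ∂μ := by
  obtain ⟨C, hC⟩ := hh.bounded
  obtain ⟨K, hK⟩ := hh.bounded_fderiv
  have hh_cont := hh.continuous
  have hh'_cont := hh.continuous_fderiv
  have hnorm : Integrable (fun x : E => ‖x‖) μ := IsGaussian.integrable_id.norm
  have hnorm_sq : Integrable (fun x : E => ‖x‖ ^ 2) μ :=
    IsGaussian.memLp_two_id.integrable_norm_pow'
  have hbound : Integrable (fun z : E × E => K * (‖z.1‖ + ‖z.2‖) * (‖L‖ * ‖z.2‖)) (μ.prod μ) := by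
    convert! ((hnorm.mul_prod hnorm).add (hnorm_sq.comp_snd μ)).const_mul (K * ‖L‖) using 2
    simp only [Pi.add_apply]
    ring
  obtain ⟨hint, hderiv⟩ := hasDerivAt_integral_of_dominated_loc_of_deriv_le (μ := μ.prod μ)
    (F := fun θ z => h (cos θ • z.1 + sin θ • z.2) * L z.2)
    (F' := fun θ z => fderiv ℝ h (cos θ • z.1 + sin θ • z.2) (-sin θ • z.1 + cos θ • z.2) * L z.2)
    (x₀ := 0) univ_mem (Eventually.of_forall fun _ => Continuous.aestronglyMeasurable (by fun_prop))
    (((L.integrable_comp IsGaussian.integrable_id).comp_snd μ).bdd_mul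
      (Continuous.aestronglyMeasurable (by fun_prop)) (ae_of_all _ fun _ => hC _))
    (Continuous.aestronglyMeasurable (by fun_prop))
    (ae_of_all _ fun z θ _ => norm_mul_le_of_le (norm_apply_rotation_snd_le (hK _) z.1 z.2 θ)
      (L.le_opNorm z.2)) hbound
    (ae_of_all _ fun z θ _ =>
      (hasDerivAt_comp_rotation hh.differentiable z.1 z.2 θ).mul_const (L z.2))
  simp_rw [integral_comp_rotation_mul_dual hμ hh L] at hderiv
  simp only [cos_zero, sin_zero, one_smul, zero_smul, add_zero, neg_zero, zero_add] at hint hderiv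
  calc ∫ x, h x * L x ∂μ
      = ∫ z, fderiv ℝ h z.1 z.2 * L z.2 ∂(μ.prod μ) := by
        simpa using ((hasDerivAt_sin 0).mul_const (∫ x, h x * L x ∂μ)).unique hderiv
    _ = ∫ x, ∫ y, fderiv ℝ h x y * L y ∂μ ∂μ := integral_prod _ hint
    _ = ∫ x, covarianceBilinDual μ (fderiv ℝ h x) L ∂μ := by
        simp_rw [covarianceBilinDual_apply_of_integral_eq_zero hμ]

lemma integral_comp_smul_add_mul_dual {h : E → ℝ} (hh : IsBoundedC1 h) (c : ℝ) (v : E)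
    (L : StrongDual ℝ E) :
    ∫ x, h (c • x + v) * L x ∂μ =
      c * ∫ x, covarianceBilinDual μ (fderiv ℝ h (c • x + v)) L ∂μ := by
  rw [integral_mul_dual_eq_integral_covariance hμ (hh.comp_smul_add c v), ← integral_const_mul]
  simp_rw [(hasFDerivAt_comp_smul_add hh.differentiable c v _).fderiv, map_smul, smul_apply,
    smul_eq_mul]

theorem integral_mul_integral_fderiv_rotation {f k : E → ℝ} (hf : IsBoundedC1 f)
    (hk : IsBoundedC1 k) (θ : ℝ) :
    ∫ x, k x * ∫ y, fderiv ℝ f (cos θ • x + sin θ • y) (-sin θ • x + cos θ • y) ∂μ ∂μ =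
      -sin θ * ∫ x, covarianceBilinDual μ (fderiv ℝ k x) (mehler μ θ (fderiv ℝ f) x) ∂μ := by
  obtain ⟨C, hC⟩ := hk.bounded
  obtain ⟨L, hL⟩ := hf.bounded_fderiv
  obtain ⟨K, hK⟩ := hk.bounded_fderiv
  have hk_cont := hk.continuous
  have hk'_cont := hk.continuous_fderiv
  have hf'_cont := hf.continuous_fderiv
  let H : E × E → ℝ := fun z => k (-sin θ • z.2 + cos θ • z.1) * fderiv ℝ f z.1 z.2
  let J : E × E → ℝ := fun z =>
    covarianceBilinDual μ (fderiv ℝ k (-sin θ • z.2 + cos θ • z.1)) (fderiv ℝ f z.1)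
  have hH_int : Integrable H (μ.prod μ) := by
    refine ((IsGaussian.integrable_id.norm.comp_snd μ).const_mul (C * L)).mono'
      (Continuous.aestronglyMeasurable (by fun_prop)) (ae_of_all _ fun z => ?_)
    rw [mul_assoc]
    exact norm_mul_le_of_le (hC _) ((fderiv ℝ f z.1).le_of_opNorm_le (hL _) z.2)
  have hJ_cont : Continuous J := by fun_prop
  have hJ_int : Integrable J (μ.prod μ) :=
    integrable_of_continuous_of_norm_le hJ_cont (C := K * L * ∫ x, ‖x‖ ^ 2 ∂μ) fun z => by
      refine (norm_covarianceBilinDual_le hμ _ _).trans ?_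
      gcongr
      exacts [(norm_nonneg _).trans (hK 0), hK _, hL _]
  calc ∫ x, k x * ∫ y, fderiv ℝ f (cos θ • x + sin θ • y) (-sin θ • x + cos θ • y) ∂μ ∂μ
      = ∫ x, ∫ y, H (ContinuousLinearMap.rotation θ (x, y)) ∂μ ∂μ := by
        simp_rw [H, ContinuousLinearMap.rotation_apply, neg_sin_smul_add_cos_smul_rotation,
          integral_const_mul]
    _ = ∫ u, ∫ w, H (u, w) ∂μ ∂μ := integral_integral_comp_rotation hμ hH_int θ
    _ = ∫ u, -sin θ * ∫ w, J (u, w) ∂μ ∂μ := by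
        congr with u
        exact integral_comp_smul_add_mul_dual hμ hk (-sin θ) (cos θ • u) (fderiv ℝ f u)
    _ = -sin θ * ∫ x, ∫ y, J (ContinuousLinearMap.rotation θ (x, y)) ∂μ ∂μ := by
        rw [integral_const_mul, integral_integral_comp_rotation hμ hJ_int]
    _ = -sin θ * ∫ x, covarianceBilinDual μ (fderiv ℝ k x) (mehler μ θ (fderiv ℝ f) x) ∂μ := by
        simp_rw [J, ContinuousLinearMap.rotation_apply, neg_sin_smul_add_cos_smul_rotation]
        congr with x
        exact ContinuousLinearMap.integral_comp_comm _
          (integrable_of_continuous_of_norm_le (by fun_prop) fun _ => hL _)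

end IntegrationByParts

section PositiveForms

variable {V : Type*}

lemma two_mul_apply_sub_le_div [AddCommGroup V] [Module ℝ V] {B : LinearMap.BilinForm ℝ V}
    (hB : B.IsPosSemidef) {t : ℝ} (ht : 0 < t) (u w : V) :
    2 * B u w - t * B w w ≤ B u u / t := by
  rw [le_div_iff₀ ht]
  have hnonneg := hB.nonneg (u - t • w)
  have hsymm : B w u = B u w := hB.isSymm.eq w u
  simp only [map_sub, map_smul, LinearMap.sub_apply, LinearMap.smul_apply, smul_eq_mul] at hnonneg
  rw [hsymm] at hnonneg
  linarith

lemma apply_add_self_le [AddCommGroup V] [Module ℝ V] {B : LinearMap.BilinForm ℝ V}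
    (hB : B.IsPosSemidef) {t : ℝ} (ht : 0 < t) (u w : V) :
    B (u + w) (u + w) ≤ (1 + t) * B u u + (1 + 1 / t) * B w w := by
  have hcross := two_mul_apply_sub_le_div hB ht w u
  have hsymm : B w u = B u w := hB.isSymm.eq w u
  simp only [map_add, LinearMap.add_apply]
  linarith [show (1 + 1 / t) * B w w = B w w + B w w / t by ring]

lemma apply_smul_add_smul_self_le [AddCommGroup V] [Module ℝ V] {B : LinearMap.BilinForm ℝ V}
    (hB : B.IsPosSemidef) {c k C : ℝ} (hc : c ^ 2 ≤ 1) (hk : 0 < k) (t : ℝ) (u : V) {w : V}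
    (hw : B w w ≤ C) :
    B (c • u + (2 * k * t) • w) (c • u + (2 * k * t) • w) ≤
      (1 + k) * B u u + 4 * C * (k ^ 2 + k) * t ^ 2 := by
  calc _ ≤ (1 + k) * B (c • u) (c • u) + (1 + 1 / k) * B ((2 * k * t) • w) ((2 * k * t) • w) :=
        apply_add_self_le hB hk _ _
    _ = (1 + k) * (c ^ 2 * B u u) + 4 * B w w * (k ^ 2 + k) * t ^ 2 := by
        simp only [map_smul, LinearMap.smul_apply, smul_eq_mul]
        field_simp
        ring
    _ ≤ (1 + k) * (1 * B u u) + 4 * C * (k ^ 2 + k) * t ^ 2 := by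
        gcongr
        exact hB.nonneg u
    _ = _ := by rw [one_mul]

/-- Jensen's inequality for the perspective `(t, u) ↦ B u u / t` of a positive semidefinite
quadratic form. -/
theorem apply_integral_div_integral_le [NormedAddCommGroup V] [NormedSpace ℝ V] [CompleteSpace V]
    {B : V →L[ℝ] V →L[ℝ] ℝ} (hB : B.toBilinForm.IsPosSemidef) {α : Type*} [MeasurableSpace α]
    {ν : Measure α} {G : α → V} {g : α → ℝ} (hG : Integrable G ν) (hg : Integrable g ν)
    (hg_pos : ∀ x, 0 < g x) (hGg : Integrable (fun x => B (G x) (G x) / g x) ν)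
    (hm : 0 < ∫ x, g x ∂ν) :
    B (∫ x, G x ∂ν) (∫ x, G x ∂ν) / ∫ x, g x ∂ν ≤ ∫ x, B (G x) (G x) / g x ∂ν := by
  set m := ∫ x, g x ∂ν
  set M := ∫ x, G x ∂ν
  let w : V := m⁻¹ • M
  have hGw : Integrable (fun x => B (G x) w) ν := (B.flip w).integrable_comp hG
  have hGw_eq : ∫ x, B (G x) w ∂ν = B M w := (B.flip w).integral_comp_comm hG
  calc B M M / m = 2 * B M w - m * B w w := by
        simp only [w, map_smul, smul_apply, smul_eq_mul]
        field_simp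
        ring
    _ = ∫ x, (2 * B (G x) w - g x * B w w) ∂ν := by
        rw [integral_sub (hGw.const_mul 2) (hg.mul_const _), integral_const_mul,
          integral_mul_const, hGw_eq]
    _ ≤ ∫ x, B (G x) (G x) / g x ∂ν :=
        integral_mono ((hGw.const_mul 2).sub (hg.mul_const _)) hGg fun x =>
          two_mul_apply_sub_le_div hB (hg_pos x) (G x) w

end PositiveForms

section Entropy

variable {E : Type*} [NormedAddCommGroup E] [NormedSpace ℝ E] [MeasurableSpace E] [BorelSpace E]
  {μ : Measure E} {f : E → ℝ}

/-- The density with respect to `μ` of the Fisher information of `f • μ` relative to `μ`, the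
derivative of `f` being measured by the covariance form of `μ`. -/
def fisherDensity (μ : Measure E) (f : E → ℝ) (x : E) : ℝ :=
  covarianceBilinDual μ (fderiv ℝ f x) (fderiv ℝ f x) / f x

lemma fisherDensity_nonneg (hf : ∀ x, 0 ≤ f x) (x : E) : 0 ≤ fisherDensity μ f x :=
  div_nonneg (covarianceBilinDual_self_nonneg _) (hf x)

lemma continuous_fisherDensity (hf : ContDiff ℝ 1 f) (hf_pos : ∀ x, 0 < f x) :
    Continuous (fisherDensity μ f) := by
  have := hf.continuous_fderiv one_ne_zero
  exact Continuous.div (by fun_prop) hf.continuous fun x => (hf_pos x).ne'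

lemma IsBoundedC1.exists_covarianceBilinDual_fderiv_le (hμ : μ[id] = 0) (hf : IsBoundedC1 f) :
    ∃ C, ∀ x, covarianceBilinDual μ (fderiv ℝ f x) (fderiv ℝ f x) ≤ C := by
  obtain ⟨L, hL⟩ := hf.bounded_fderiv
  refine ⟨L * L * ∫ x, ‖x‖ ^ 2 ∂μ, fun x => ?_⟩
  refine (le_abs_self _).trans ((norm_covarianceBilinDual_le hμ _ _).trans ?_)
  gcongr
  exacts [(norm_nonneg _).trans (hL 0), hL x, hL x]

variable [SecondCountableTopology E] [CompleteSpace E] [IsGaussian μ] (hμ : μ[id] = 0)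
  {a b : ℝ} (ha : 0 < a) (hf : IsBoundedC1 f) (hfab : ∀ x, f x ∈ Icc a b)

section
include hμ ha hf hfab

omit [SecondCountableTopology E] [CompleteSpace E] [IsGaussian μ] in
lemma exists_norm_fisherDensity_le : ∃ C, ∀ x, ‖fisherDensity μ f x‖ ≤ C := by
  obtain ⟨C, hC⟩ := hf.exists_covarianceBilinDual_fderiv_le hμ
  refine ⟨C / a, fun x => ?_⟩
  rw [norm_of_nonneg (fisherDensity_nonneg (fun x => ha.le.trans (hfab x).1) x)]
  exact div_le_div₀ ((covarianceBilinDual_self_nonneg _).trans (hC x)) (hC x) ha (hfab x).1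

omit [CompleteSpace E] in
lemma covarianceBilinDual_mehler_div_le_mehler_fisherDensity (θ : ℝ) (x : E) :
    covarianceBilinDual μ (mehler μ θ (fderiv ℝ f) x) (mehler μ θ (fderiv ℝ f) x) /
      mehler μ θ f x ≤ mehler μ θ (fisherDensity μ f) x := by
  obtain ⟨C, hC⟩ := hf.bounded
  obtain ⟨L, hL⟩ := hf.bounded_fderiv
  obtain ⟨D, hD⟩ := exists_norm_fisherDensity_le hμ ha hf hfab
  have hf_pos x : 0 < f x := ha.trans_le (hfab x).1
  have hf_cont := hf.continuous
  have hf'_cont := hf.continuous_fderiv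
  have hI_cont := continuous_fisherDensity (μ := μ) hf.contDiff hf_pos
  exact apply_integral_div_integral_le isPosSemidef_covarianceBilinDual
    (integrable_of_continuous_of_norm_le (f := fun y => fderiv ℝ f (cos θ • x + sin θ • y))
      (by fun_prop) fun _ => hL _)
    (integrable_of_continuous_of_norm_le (f := fun y => f (cos θ • x + sin θ • y))
      (by fun_prop) fun _ => hC _)
    (fun _ => hf_pos _)
    (integrable_of_continuous_of_norm_le (f := fun y => fisherDensity μ f (cos θ • x + sin θ • y))
      (by fun_prop) fun _ => hD _)
    (ha.trans_le (mehler_mem_Icc hf_cont hfab x).1)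

omit hμ in
lemma hasDerivAt_klFun_mehler (x : E) (θ : ℝ) :
    HasDerivAt (fun θ => klFun (mehler μ θ f x)) (log (mehler μ θ f x) *
      ∫ y, fderiv ℝ f (cos θ • x + sin θ • y) (-sin θ • x + cos θ • y) ∂μ) θ :=
  HasDerivAt.comp (h₂ := klFun) θ
    (hasDerivAt_klFun (ha.trans_le (mehler_mem_Icc hf.continuous hfab x).1).ne')
    (hf.hasDerivAt_mehler_angle IsGaussian.integrable_id x θ)

lemma integral_log_mul_integral_fderiv_rotation (θ : ℝ) :
    ∫ x, log (mehler μ θ f x) *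
        ∫ y, fderiv ℝ f (cos θ • x + sin θ • y) (-sin θ • x + cos θ • y) ∂μ ∂μ =
      -(sin θ * cos θ) * ∫ x, covarianceBilinDual μ (mehler μ θ (fderiv ℝ f) x)
        (mehler μ θ (fderiv ℝ f) x) / mehler μ θ f x ∂μ := by
  have hQ_ge x : a ≤ mehler μ θ f x := (mehler_mem_Icc hf.continuous hfab x).1
  have hQ : IsBoundedC1 (mehler μ θ f) := hf.mehler θ
  rw [integral_mul_integral_fderiv_rotation hμ hf (hQ.log ha hQ_ge), ← integral_const_mul,
    ← integral_const_mul]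
  congr with x
  rw [fderiv.log (hQ.differentiable x) (ha.trans_le (hQ_ge x)).ne',
    hf.fderiv_mehler]
  simp only [map_smul, smul_apply, smul_eq_mul]
  ring

theorem hasDerivAt_integral_klFun_mehler (θ : ℝ) :
    HasDerivAt (fun θ => ∫ x, klFun (mehler μ θ f x) ∂μ)
      (-(sin θ * cos θ) * ∫ x, covarianceBilinDual μ (mehler μ θ (fderiv ℝ f) x)
        (mehler μ θ (fderiv ℝ f) x) / mehler μ θ f x ∂μ) θ := by
  obtain ⟨C, hC⟩ := hf.bounded
  obtain ⟨L, hL⟩ := hf.bounded_fderiv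
  obtain ⟨D, hD⟩ := isCompact_Icc.exists_bound_of_continuousOn (s := Icc a b)
    continuous_klFun.continuousOn
  have hf_cont := hf.continuous
  have hQ_mem θ x : mehler μ θ f x ∈ Icc a b := mehler_mem_Icc hf_cont hfab x
  have hkl_cont θ : Continuous fun x => klFun (mehler μ θ f x) :=
    continuous_klFun.comp (continuous_mehler hf_cont hC)
  have hnorm : Integrable (fun x : E => ‖x‖) μ := IsGaussian.integrable_id.norm
  have hlog_le θ x : ‖log (mehler μ θ f x)‖ ≤ max |log a| |log b| :=
    abs_le_max_abs_abs (log_le_log ha (hQ_mem θ x).1)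
      (log_le_log (ha.trans_le (hQ_mem θ x).1) (hQ_mem θ x).2)
  have hbound : Integrable
      (fun x => max |log a| |log b| * ∫ y, L * (‖x‖ + ‖y‖) ∂μ) μ := by
    simp_rw [integral_const_mul, integral_add (integrable_const _) hnorm, integral_const]
    exact (((hnorm.const_mul _).add (integrable_const _)).const_mul L).const_mul _
  rw [← integral_log_mul_integral_fderiv_rotation hμ ha hf hfab]
  exact (hasDerivAt_integral_of_dominated_loc_of_deriv_le univ_mem
    (Eventually.of_forall fun θ => (hkl_cont θ).aestronglyMeasurable)
    (integrable_of_continuous_of_norm_le (hkl_cont θ) fun x => hD _ (hQ_mem θ x))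
    ((continuous_mehler hf_cont hC).measurable.log.aestronglyMeasurable.mul
      (hf.stronglyMeasurable_integral_fderiv_rotation _).aestronglyMeasurable)
    (ae_of_all μ fun x θ _ => norm_mul_le_of_le (hlog_le θ x)
      (norm_integral_fderiv_rotation_le IsGaussian.integrable_id hL x θ)) hbound
    (ae_of_all μ fun x θ _ => hasDerivAt_klFun_mehler ha hf hfab x θ)).2

theorem integral_klFun_le_of_isBoundedC1 :
    ∫ x, klFun (f x) ∂μ ≤ klFun (∫ x, f x ∂μ) + 1 / 2 * ∫ x, fisherDensity μ f x ∂μ := by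
  obtain ⟨D, hD⟩ := exists_norm_fisherDensity_le hμ ha hf hfab
  have hI_cont := continuous_fisherDensity (μ := μ) hf.contDiff fun x => ha.trans_le (hfab x).1
  let Ψ : ℝ → ℝ := fun θ =>
    ∫ x, klFun (mehler μ θ f x) ∂μ + sin θ ^ 2 / 2 * ∫ x, fisherDensity μ f x ∂μ
  have hΨ θ := (hasDerivAt_integral_klFun_mehler hμ ha hf hfab θ).add
    ((((hasDerivAt_sin θ).pow 2).div_const 2).mul_const (∫ x, fisherDensity μ f x ∂μ))
  have hJensen θ : ∫ x, covarianceBilinDual μ (mehler μ θ (fderiv ℝ f) x)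
      (mehler μ θ (fderiv ℝ f) x) / mehler μ θ f x ∂μ ≤ ∫ x, fisherDensity μ f x ∂μ := by
    rw [← integral_mehler hμ hI_cont hD θ]
    refine integral_mono_of_nonneg (ae_of_all μ fun x => ?_)
      (integrable_of_continuous_of_norm_le (continuous_mehler hI_cont hD) (norm_mehler_le hD))
      (ae_of_all μ fun x =>
        covarianceBilinDual_mehler_div_le_mehler_fisherDensity hμ ha hf hfab θ x)
    exact div_nonneg (covarianceBilinDual_self_nonneg _)
      (ha.le.trans (mehler_mem_Icc hf.continuous hfab x).1)
  have hmono : MonotoneOn Ψ (Icc 0 (π / 2)) := by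
    refine monotoneOn_of_hasDerivWithinAt_nonneg (convex_Icc _ _)
      (fun θ _ => (hΨ θ).continuousAt.continuousWithinAt)
      (fun θ _ => (hΨ θ).hasDerivWithinAt) fun θ hθ => ?_
    rw [interior_Icc] at hθ
    have hsin : 0 ≤ sin θ := sin_nonneg_of_nonneg_of_le_pi hθ.1.le (by linarith [hθ.2, pi_pos])
    have hcos : 0 ≤ cos θ :=
      cos_nonneg_of_neg_pi_div_two_le_of_le (by linarith [hθ.1, pi_pos]) hθ.2.le
    have hgap := mul_nonneg (mul_nonneg hsin hcos) (sub_nonneg.2 (hJensen θ))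
    simp only [Nat.cast_ofNat, Nat.add_one_sub_one, pow_one]
    linarith
  have hends := hmono (left_mem_Icc.2 (by positivity)) (right_mem_Icc.2 (by positivity))
    (by positivity : 0 ≤ π / 2)
  simpa [Ψ] using hends

end

end Entropy

section Truncation

variable {E : Type*} [NormedAddCommGroup E] [NormedSpace ℝ E] {f : E → ℝ}

namespace IsBoundedC1

lemma of_hasCompactSupport (hf : ContDiff ℝ 1 f) (hf_supp : HasCompactSupport f) :
    IsBoundedC1 f :=
  ⟨hf, hf_supp.exists_bound_of_continuous hf.continuous,
    (hf_supp.fderiv (𝕜 := ℝ)).exists_bound_of_continuous (hf.continuous_fderiv one_ne_zero)⟩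

lemma add_const (hf : IsBoundedC1 f) (c : ℝ) : IsBoundedC1 fun x => f x + c := by
  obtain ⟨C, hC⟩ := hf.bounded
  obtain ⟨L, hL⟩ := hf.bounded_fderiv
  exact ⟨hf.contDiff.add contDiff_const, ⟨C + ‖c‖, fun x => norm_add_le_of_le (hC x) le_rfl⟩,
    ⟨L, fun x => by rw [fderiv_add_const]; exact hL x⟩⟩

end IsBoundedC1

variable [FiniteDimensional ℝ E] (χ : ContDiffBump (0 : E)) {k : ℝ}

/-- A bounded approximation of `f` that is bounded below by `k`; the cutoff is squared so that
its Fisher information stays comparable to that of `f`. -/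
def smoothTruncation (k : ℝ) (f : E → ℝ) (x : E) : ℝ :=
  χ (k • x) ^ 2 * f x + k

lemma le_smoothTruncation (hf : ∀ x, 0 ≤ f x) (x : E) : k ≤ smoothTruncation χ k f x :=
  le_add_of_nonneg_left (mul_nonneg (sq_nonneg _) (hf x))

lemma smoothTruncation_le (hf : ∀ x, 0 ≤ f x) (x : E) : smoothTruncation χ k f x ≤ f x + k := by
  rw [smoothTruncation]
  gcongr
  exact mul_le_of_le_one_left (hf x) (pow_le_one₀ χ.nonneg χ.le_one)

lemma continuous_smoothTruncation (hf : Continuous f) : Continuous (smoothTruncation χ k f) := by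
  have hχ := χ.continuous
  unfold smoothTruncation
  fun_prop

lemma isBoundedC1_smoothTruncation (hf : ContDiff ℝ 1 f) (hk : k ≠ 0) :
    IsBoundedC1 (smoothTruncation χ k f) := by
  have hcutoff : ContDiff ℝ 1 fun x => χ (k • x) := χ.contDiff.comp (contDiff_const_smul k)
  have hsupp : HasCompactSupport fun x => χ (k • x) * (χ (k • x) * f x) :=
    (χ.hasCompactSupport.comp_smul hk).mul_right
  have hbounded := IsBoundedC1.of_hasCompactSupport (hcutoff.mul (hcutoff.mul hf)) hsupp
  convert! hbounded.add_const k using 2 with x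
  rw [smoothTruncation]
  ring

lemma fderiv_smoothTruncation (hf : ContDiff ℝ 1 f) (x : E) :
    fderiv ℝ (smoothTruncation χ k f) x =
      χ (k • x) • (χ (k • x) • fderiv ℝ f x + (2 * k * f x) • fderiv ℝ χ (k • x)) := by
  have hχ : HasFDerivAt (fun x => χ (k • x)) (k • fderiv ℝ χ (k • x)) x := by
    have hχ_diff : Differentiable ℝ χ := χ.contDiff.differentiable one_ne_zero
    convert! (hχ_diff (k • x)).hasFDerivAt.comp x ((hasFDerivAt_id x).const_smul k) using 1
    simp
  have hf' : HasFDerivAt f (fderiv ℝ f x) x := (hf.differentiable one_ne_zero x).hasFDerivAt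
  convert! (((hχ.pow 2).mul hf').add_const k).fderiv using 1
  simp only [Nat.add_one_sub_one, pow_one, smul_smul, smul_add, nsmul_eq_mul, Nat.cast_ofNat, sq]
  module

lemma tendsto_smoothTruncation (x : E) :
    Tendsto (fun k => smoothTruncation χ k f x) (𝓝 0) (𝓝 (f x)) := by
  have hcont : Continuous fun k : ℝ => smoothTruncation χ k f x := by
    have hχ := χ.continuous
    unfold smoothTruncation
    fun_prop
  convert hcont.tendsto 0 using 2
  simp [smoothTruncation, χ.eventuallyEq_one.eq_of_nhds]

section FisherDensity

variable [MeasurableSpace E] [BorelSpace E] {μ : Measure E}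

lemma fisherDensity_smoothTruncation_le {C : ℝ}
    (hC : ∀ x, covarianceBilinDual μ (fderiv ℝ χ x) (fderiv ℝ χ x) ≤ C) (hf : ContDiff ℝ 1 f)
    (hf_pos : ∀ x, 0 < f x) (hk : 0 < k) (x : E) :
    fisherDensity μ (smoothTruncation χ k f) x ≤
      (1 + k) * fisherDensity μ f x + 4 * C * (k ^ 2 + k) * f x := by
  set c := χ (k • x)
  set u := fderiv ℝ f x
  set w := fderiv ℝ χ (k • x)
  set g := smoothTruncation χ k f x with hg
  have hfx := hf_pos x
  have hg_pos : 0 < g := hk.trans_le (le_smoothTruncation χ (fun x => (hf_pos x).le) x)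
  have hc : c ^ 2 ≤ 1 := pow_le_one₀ χ.nonneg χ.le_one
  have hcg : c ^ 2 / g ≤ 1 / f x := by
    rw [div_le_div_iff₀ hg_pos hfx, hg, smoothTruncation]
    linarith
  have hsplit : covarianceBilinDual μ (c • u + (2 * k * f x) • w) (c • u + (2 * k * f x) • w) ≤
      (1 + k) * covarianceBilinDual μ u u + 4 * C * (k ^ 2 + k) * f x ^ 2 :=
    apply_smul_add_smul_self_le isPosSemidef_covarianceBilinDual hc hk (f x) u (hC _)
  calc fisherDensity μ (smoothTruncation χ k f) x
      = c ^ 2 / g * covarianceBilinDual μ (c • u + (2 * k * f x) • w)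
          (c • u + (2 * k * f x) • w) := by
        rw [fisherDensity, fderiv_smoothTruncation χ hf]
        simp only [map_smul, smul_apply, smul_eq_mul]
        ring
    _ ≤ 1 / f x * ((1 + k) * covarianceBilinDual μ u u + 4 * C * (k ^ 2 + k) * f x ^ 2) :=
        mul_le_mul hcg hsplit (covarianceBilinDual_self_nonneg _) (by positivity)
    _ = _ := by
        simp only [fisherDensity, u]
        field_simp

variable [IsGaussian μ] (hμ : μ[id] = 0)
include hμ

lemma lintegral_klFun_smoothTruncation_le {C : ℝ}
    (hC : ∀ x, covarianceBilinDual μ (fderiv ℝ χ x) (fderiv ℝ χ x) ≤ C) (hf : ContDiff ℝ 1 f)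
    (hf_pos : ∀ x, 0 < f x) (hf_int : Integrable f μ) (hI : Integrable (fisherDensity μ f) μ)
    (hk : 0 < k) :
    ∫⁻ x, ENNReal.ofReal (klFun (smoothTruncation χ k f x)) ∂μ ≤
      ENNReal.ofReal (klFun (∫ x, smoothTruncation χ k f x ∂μ) + 1 / 2 *
        ((1 + k) * ∫ x, fisherDensity μ f x ∂μ + 4 * C * (k ^ 2 + k) * ∫ x, f x ∂μ)) := by
  have : CompleteSpace E := FiniteDimensional.complete ℝ E
  have hg := isBoundedC1_smoothTruncation χ hf hk.ne'
  obtain ⟨b, hb⟩ := hg.bounded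
  have hg_ge := le_smoothTruncation χ (k := k) fun x => (hf_pos x).le
  have hg_mem x : smoothTruncation χ k f x ∈ Icc k b := ⟨hg_ge x, (le_abs_self _).trans (hb x)⟩
  obtain ⟨D, hD⟩ := isCompact_Icc.exists_bound_of_continuousOn (s := Icc k b)
    continuous_klFun.continuousOn
  have hkl_int : Integrable (fun x => klFun (smoothTruncation χ k f x)) μ :=
    integrable_of_continuous_of_norm_le (continuous_klFun.comp hg.continuous)
      fun x => hD _ (hg_mem x)
  rw [← ofReal_integral_eq_lintegral_ofReal hkl_int
    (ae_of_all μ fun x => klFun_nonneg (hk.le.trans (hg_ge x)))]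
  refine ENNReal.ofReal_le_ofReal
    ((integral_klFun_le_of_isBoundedC1 hμ hk hg hg_mem).trans ?_)
  gcongr
  calc ∫ x, fisherDensity μ (smoothTruncation χ k f) x ∂μ
      ≤ ∫ x, ((1 + k) * fisherDensity μ f x + 4 * C * (k ^ 2 + k) * f x) ∂μ :=
        integral_mono_of_nonneg
          (ae_of_all μ (fisherDensity_nonneg fun x => hk.le.trans (hg_ge x)))
          ((hI.const_mul _).add (hf_int.const_mul _))
          (ae_of_all μ (fisherDensity_smoothTruncation_le χ hC hf hf_pos hk))
    _ = _ := by
        rw [integral_add (hI.const_mul _) (hf_int.const_mul _), integral_const_mul,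
          integral_const_mul]

end FisherDensity

lemma tendsto_integral_smoothTruncation [MeasurableSpace E] [BorelSpace E] {μ : Measure E}
    [IsFiniteMeasure μ] (hf : Continuous f) (hf_nonneg : ∀ x, 0 ≤ f x) (hf_int : Integrable f μ) :
    Tendsto (fun k => ∫ x, smoothTruncation χ k f x ∂μ) (𝓝[>] 0) (𝓝 (∫ x, f x ∂μ)) := by
  have hk_mem : ∀ᶠ k : ℝ in 𝓝[>] 0, k ∈ Ioc 0 1 := Ioc_mem_nhdsGT one_pos
  refine tendsto_integral_filter_of_dominated_convergence (fun x => f x + 1)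
    (Eventually.of_forall fun k => (continuous_smoothTruncation χ hf).aestronglyMeasurable)
    ?_ (hf_int.add (integrable_const 1))
    (ae_of_all μ fun x => (tendsto_smoothTruncation χ x).mono_left nhdsWithin_le_nhds)
  filter_upwards [hk_mem] with k hk
  refine ae_of_all μ fun x => ?_
  rw [norm_of_nonneg (hk.1.le.trans (le_smoothTruncation χ hf_nonneg x))]
  exact (smoothTruncation_le χ hf_nonneg x).trans (by gcongr; exact hk.2)

end Truncation

section LogSobolev

variable {E : Type*} [NormedAddCommGroup E] [NormedSpace ℝ E] [FiniteDimensional ℝ E]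
  [MeasurableSpace E] [BorelSpace E] {μ : Measure E} {f : E → ℝ}

section
variable [IsGaussian μ] (hμ : μ[id] = 0) (hf : ContDiff ℝ 1 f) (hf_pos : ∀ x, 0 < f x)
  (hf_int : Integrable f μ)
include hμ hf hf_pos hf_int

lemma lintegral_klFun_le_of_integrable_fisherDensity (hI : Integrable (fisherDensity μ f) μ) :
    ∫⁻ x, ENNReal.ofReal (klFun (f x)) ∂μ ≤
      ENNReal.ofReal (klFun (∫ x, f x ∂μ) + 1 / 2 * ∫ x, fisherDensity μ f x ∂μ) := by
  let χ : ContDiffBump (0 : E) := ⟨1, 2, one_pos, one_lt_two⟩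
  obtain ⟨C, hC⟩ := (IsBoundedC1.of_hasCompactSupport χ.contDiff
    χ.hasCompactSupport).exists_covarianceBilinDual_fderiv_le hμ
  let bound : ℝ → ℝ := fun k => klFun (∫ x, smoothTruncation χ k f x ∂μ) + 1 / 2 *
    ((1 + k) * ∫ x, fisherDensity μ f x ∂μ + 4 * C * (k ^ 2 + k) * ∫ x, f x ∂μ)
  let k : ℕ → ℝ := fun n => 1 / ((n : ℝ) + 1)
  have hk_pos n : 0 < k n := Nat.one_div_pos_of_nat
  have hk_zero : Tendsto k atTop (𝓝 0) := tendsto_one_div_add_atTop_nhds_zero_nat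
  have hk : Tendsto k atTop (𝓝[>] 0) :=
    tendsto_nhdsWithin_iff.2 ⟨hk_zero, Eventually.of_forall hk_pos⟩
  have hlim x : Tendsto (fun n => ENNReal.ofReal (klFun (smoothTruncation χ (k n) f x))) atTop
      (𝓝 (ENNReal.ofReal (klFun (f x)))) :=
    ENNReal.tendsto_ofReal
      ((continuous_klFun.tendsto _).comp ((tendsto_smoothTruncation χ x).comp hk_zero))
  have hbound : Tendsto (fun n => bound (k n)) atTop
      (𝓝 (klFun (∫ x, f x ∂μ) + 1 / 2 * ∫ x, fisherDensity μ f x ∂μ)) := by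
    have hmean := (continuous_klFun.tendsto _).comp
      ((tendsto_integral_smoothTruncation χ hf.continuous (fun x => (hf_pos x).le) hf_int).comp hk)
    have hpoly : Continuous fun t : ℝ => 1 / 2 * ((1 + t) * ∫ x, fisherDensity μ f x ∂μ +
      4 * C * (t ^ 2 + t) * ∫ x, f x ∂μ) := by fun_prop
    simpa [bound] using hmean.add ((hpoly.tendsto 0).comp hk_zero)
  calc ∫⁻ x, ENNReal.ofReal (klFun (f x)) ∂μ
      ≤ liminf (fun n => ∫⁻ x, ENNReal.ofReal (klFun (smoothTruncation χ (k n) f x)) ∂μ) atTop := by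
        simp_rw [← fun x => (hlim x).liminf_eq]
        exact lintegral_liminf_le fun n => (continuous_klFun.comp
          (continuous_smoothTruncation χ hf.continuous)).measurable.ennreal_ofReal
    _ ≤ liminf (fun n => ENNReal.ofReal (bound (k n))) atTop :=
        liminf_le_liminf (Eventually.of_forall fun n =>
          lintegral_klFun_smoothTruncation_le χ hμ hC hf hf_pos hf_int hI (hk_pos n))
    _ = _ := (ENNReal.tendsto_ofReal hbound).liminf_eq

theorem lintegral_klFun_le :
    ∫⁻ x, ENNReal.ofReal (klFun (f x)) ∂μ ≤ ENNReal.ofReal (klFun (∫ x, f x ∂μ)) +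
      ENNReal.ofReal (1 / 2) * ∫⁻ x, ENNReal.ofReal (fisherDensity μ f x) ∂μ := by
  have hf_nonneg x : 0 ≤ f x := (hf_pos x).le
  have hI_nonneg := fisherDensity_nonneg (μ := μ) hf_nonneg
  by_cases hI_top : ∫⁻ x, ENNReal.ofReal (fisherDensity μ f x) ∂μ = ∞
  · simp [hI_top]
  have hI : Integrable (fisherDensity μ f) μ :=
    (lintegral_ofReal_ne_top_iff_integrable
      (continuous_fisherDensity hf hf_pos).aestronglyMeasurable (ae_of_all μ hI_nonneg)).1 hI_top
  rw [← ofReal_integral_eq_lintegral_ofReal hI (ae_of_all μ hI_nonneg),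
    ← ENNReal.ofReal_mul one_half_pos.le, ← ENNReal.ofReal_add
      (klFun_nonneg (integral_nonneg hf_nonneg))
      (mul_nonneg one_half_pos.le (integral_nonneg hI_nonneg))]
  exact lintegral_klFun_le_of_integrable_fisherDensity hμ hf hf_pos hf_int hI

end

lemma klDiv_withDensity_eq_lintegral_klFun {α : Type*} [MeasurableSpace α] {ν : Measure α}
    [IsFiniteMeasure ν] {g : α → ℝ} (hg : Measurable g) (hg_nonneg : ∀ x, 0 ≤ g x)
    (hg_int : Integrable g ν) :
    klDiv (ν.withDensity fun x => ENNReal.ofReal (g x)) ν =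
      ∫⁻ x, ENNReal.ofReal (klFun (g x)) ∂ν := by
  have := isFiniteMeasure_withDensity_ofReal hg_int.2
  rw [klDiv_eq_lintegral_klFun_of_ac (withDensity_absolutelyContinuous _ _)]
  refine lintegral_congr_ae ?_
  filter_upwards [Measure.rnDeriv_withDensity ν hg.ennreal_ofReal] with x hx
  rw [hx, ENNReal.toReal_ofReal (hg_nonneg x)]

theorem klDiv_withDensity_le_lintegral_fisherDensity [IsGaussian μ] (hμ : μ[id] = 0)
    (hf : ContDiff ℝ 1 f) (hf_pos : ∀ x, 0 < f x) (hf_one : ∫ x, f x ∂μ = 1) :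
    klDiv (μ.withDensity fun x => ENNReal.ofReal (f x)) μ ≤
      ENNReal.ofReal (1 / 2) * ∫⁻ x, ENNReal.ofReal (fisherDensity μ f x) ∂μ := by
  have hf_int : Integrable f μ := .of_integral_ne_zero (by simp [hf_one])
  rw [klDiv_withDensity_eq_lintegral_klFun hf.continuous.measurable (fun x => (hf_pos x).le) hf_int]
  simpa [hf_one, klFun_one] using lintegral_klFun_le hμ hf hf_pos hf_int

end LogSobolev

section GaussMeasure

lemma isPosSemidef_smul_innerSL {E : Type*} [NormedAddCommGroup E] [InnerProductSpace ℝ E]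
    {c : ℝ} (hc : 0 ≤ c) : (c • innerSL ℝ (E := E)).toBilinForm.IsPosSemidef :=
  ⟨⟨fun x y => congrArg (c * ·) (real_inner_comm y x)⟩,
    ⟨fun x => mul_nonneg hc (real_inner_self_nonneg (x := x))⟩⟩

variable {d : ℕ} {σ2 : ℝ}

lemma contDiff_gaussDensity : ContDiff ℝ 1 (gaussDensity d σ2) :=
  contDiff_const.mul (((contDiff_norm_sq ℝ).neg.div_const _).exp)

lemma measurable_ofReal_gaussDensity :
    Measurable fun x => ENNReal.ofReal (gaussDensity d σ2 x) :=
  contDiff_gaussDensity.continuous.measurable.ennreal_ofReal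

lemma gaussDensity_pos (hσ2 : 0 < σ2) (x : EuclideanSpace ℝ (Fin d)) :
    0 < gaussDensity d σ2 x := by
  unfold gaussDensity
  positivity

lemma integral_gaussMeasure {G : Type*} [NormedAddCommGroup G] [NormedSpace ℝ G] (hσ2 : 0 < σ2)
    (g : EuclideanSpace ℝ (Fin d) → G) :
    ∫ x, g x ∂(gaussMeasure d σ2) = ∫ x, gaussDensity d σ2 x • g x := by
  simp only [gaussMeasure, integral_withDensity_eq_integral_toReal_smul
    measurable_ofReal_gaussDensity (ae_of_all _ fun _ => ENNReal.ofReal_lt_top),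
    ENNReal.toReal_ofReal (gaussDensity_pos hσ2 _).le]

lemma lintegral_gaussMeasure (hσ2 : 0 < σ2) {g : EuclideanSpace ℝ (Fin d) → ℝ}
    (hg : Measurable g) :
    ∫⁻ x, ENNReal.ofReal (g x) ∂(gaussMeasure d σ2) =
      ∫⁻ x, ENNReal.ofReal (gaussDensity d σ2 x * g x) := by
  simp only [gaussMeasure, lintegral_withDensity_eq_lintegral_mul _
    measurable_ofReal_gaussDensity hg.ennreal_ofReal, Pi.mul_apply,
    ENNReal.ofReal_mul (gaussDensity_pos hσ2 _).le]

lemma withDensity_gaussMeasure (hσ2 : 0 < σ2) {g : EuclideanSpace ℝ (Fin d) → ℝ}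
    (hg : Measurable g) :
    (gaussMeasure d σ2).withDensity (fun x => ENNReal.ofReal (g x)) =
      volume.withDensity fun x => ENNReal.ofReal (gaussDensity d σ2 x * g x) := by
  rw [gaussMeasure, ← withDensity_mul _ measurable_ofReal_gaussDensity hg.ennreal_ofReal]
  congr with x
  rw [Pi.mul_apply, ENNReal.ofReal_mul (gaussDensity_pos hσ2 x).le]

lemma charFun_gaussMeasure (hσ2 : 0 < σ2) (t : EuclideanSpace ℝ (Fin d)) :
    charFun (gaussMeasure d σ2) t = Complex.exp (-(σ2 * ‖t‖ ^ 2 / 2)) := by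
  have hσ2' : (σ2 : ℂ) ≠ 0 := by exact_mod_cast hσ2.ne'
  have hc : (2 * π * σ2 : ℝ) ≠ 0 := by positivity
  have hdiv : (π / ((1 / (2 * σ2) : ℝ) : ℂ)) = ((2 * π * σ2 : ℝ) : ℂ) := by
    push_cast
    field_simp
  have hexponent : ((-(d : ℝ) / 2 : ℝ) : ℂ) + (d : ℂ) / 2 = 0 := by push_cast; ring
  calc charFun (gaussMeasure d σ2) t
    _ = ∫ x, (((2 * π * σ2) ^ (-(d : ℝ) / 2) : ℝ) : ℂ) *
        Complex.exp (-((1 / (2 * σ2) : ℝ) : ℂ) * ‖x‖ ^ 2 + Complex.I * inner ℝ t x) := by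
      rw [charFun_apply, integral_gaussMeasure hσ2]
      congr with x
      rw [gaussDensity, Complex.real_smul, Complex.ofReal_mul, mul_assoc, Complex.ofReal_exp,
        ← Complex.exp_add, real_inner_comm]
      congr 2
      push_cast
      ring
    _ = Complex.exp (-(σ2 * ‖t‖ ^ 2 / 2)) := by
      rw [integral_const_mul, GaussianFourier.integral_cexp_neg_mul_sq_norm_add
        (by rw [Complex.ofReal_re]; positivity), hdiv, finrank_euclideanSpace_fin,
        Complex.ofReal_cpow (by positivity), ← mul_assoc,
        ← Complex.cpow_add _ _ (Complex.ofReal_ne_zero.2 hc), hexponent, Complex.cpow_zero,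
        one_mul, Complex.I_sq]
      push_cast
      congr 1
      field_simp
      ring

variable (hσ2 : 0 < σ2)
include hσ2

lemma isProbabilityMeasure_gaussMeasure : IsProbabilityMeasure (gaussMeasure d σ2) := by
  have hmass : (gaussMeasure d σ2).real univ = 1 := by
    simpa using charFun_gaussMeasure hσ2 (0 : EuclideanSpace ℝ (Fin d))
  rw [measureReal_def, ENNReal.toReal_eq_one_iff] at hmass
  exact ⟨hmass⟩

lemma charFun_gaussMeasure_eq_innerSL (t : EuclideanSpace ℝ (Fin d)) :
    charFun (gaussMeasure d σ2) t = Complex.exp (inner ℝ t 0 * Complex.I -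
      (σ2 • innerSL ℝ (E := EuclideanSpace ℝ (Fin d))) t t / 2) := by
  simp [charFun_gaussMeasure hσ2]

lemma isGaussian_gaussMeasure : IsGaussian (gaussMeasure d σ2) := by
  have := isProbabilityMeasure_gaussMeasure (d := d) hσ2
  exact isGaussian_iff_gaussian_charFun.2
    ⟨0, _, isPosSemidef_smul_innerSL hσ2.le, charFun_gaussMeasure_eq_innerSL hσ2⟩

lemma integral_id_gaussMeasure : (gaussMeasure d σ2)[id] = 0 := by
  have := isProbabilityMeasure_gaussMeasure (d := d) hσ2
  exact (gaussian_charFun_congr 0 _ (isPosSemidef_smul_innerSL hσ2.le)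
    (charFun_gaussMeasure_eq_innerSL hσ2)).1.symm

lemma covarianceBilin_gaussMeasure :
    covarianceBilin (gaussMeasure d σ2) = σ2 • innerSL ℝ := by
  have := isProbabilityMeasure_gaussMeasure (d := d) hσ2
  exact (gaussian_charFun_congr 0 _ (isPosSemidef_smul_innerSL hσ2.le)
    (charFun_gaussMeasure_eq_innerSL hσ2)).2.symm

lemma covarianceBilinDual_gaussMeasure_fderiv (f : EuclideanSpace ℝ (Fin d) → ℝ)
    (x : EuclideanSpace ℝ (Fin d)) :
    covarianceBilinDual (gaussMeasure d σ2) (fderiv ℝ f x) (fderiv ℝ f x) =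
      σ2 * ‖gradient f x‖ ^ 2 := by
  have hcov := DFunLike.congr_fun (DFunLike.congr_fun (covarianceBilin_gaussMeasure (d := d) hσ2)
    (gradient f x)) (gradient f x)
  rw [← toDual_gradient]
  exact hcov.trans (congrArg (σ2 * ·) (real_inner_self_eq_norm_sq (gradient f x)))

lemma fisherDensity_gaussMeasure {f : EuclideanSpace ℝ (Fin d) → ℝ}
    {x : EuclideanSpace ℝ (Fin d)} (hf : DifferentiableAt ℝ f x) (hfx : f x ≠ 0) :
    fisherDensity (gaussMeasure d σ2) f x =
      σ2 * ‖gradient (fun y => log (f y)) x‖ ^ 2 * f x := by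
  rw [← covarianceBilinDual_gaussMeasure_fderiv hσ2, fderiv.log hf hfx, fisherDensity]
  simp only [map_smul, smul_apply, smul_eq_mul]
  field_simp

lemma log_gaussDensity (x : EuclideanSpace ℝ (Fin d)) :
    log (gaussDensity d σ2 x) =
      log ((2 * π * σ2) ^ (-(d : ℝ) / 2)) + -‖x‖ ^ 2 / (2 * σ2) := by
  rw [gaussDensity, log_mul (by positivity) (exp_ne_zero _), log_exp]

lemma hasGradientAt_log_gaussDensity (x : EuclideanSpace ℝ (Fin d)) :
    HasGradientAt (fun y => log (gaussDensity d σ2 y)) (-((1 / σ2) • x)) x := by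
  simp_rw [log_gaussDensity hσ2]
  rw [hasGradientAt_iff_hasFDerivAt]
  convert! (((hasStrictFDerivAt_norm_sq x).hasFDerivAt.neg.mul_const (2 * σ2)⁻¹).const_add
    (log ((2 * π * σ2) ^ (-(d : ℝ) / 2)))) using 1
  ext v
  simp only [map_neg, map_smul, neg_apply, smul_apply, InnerProductSpace.toDual_apply_apply,
    coe_innerSL_apply, smul_eq_mul, nsmul_eq_mul, Nat.cast_ofNat]
  field_simp

lemma gradient_log_div_gaussDensity {p : EuclideanSpace ℝ (Fin d) → ℝ} (hp : Differentiable ℝ p)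
    (hpos : ∀ x, 0 < p x) (x : EuclideanSpace ℝ (Fin d)) :
    gradient (fun y => log (p y / gaussDensity d σ2 y)) x =
      gradient (fun y => log (p y)) x + (1 / σ2) • x := by
  simp_rw [fun y => log_div (hpos y).ne' (gaussDensity_pos hσ2 y).ne']
  rw [← sub_neg_eq_add, ← (hasGradientAt_log_gaussDensity hσ2 x).gradient]
  simp only [gradient]
  rw [← map_sub, ← fderiv_sub ((hp x).log (hpos x).ne')
    (hasGradientAt_log_gaussDensity hσ2 x).differentiableAt]
  rfl

lemma lintegral_fisherDensity_div_gaussDensity {p : EuclideanSpace ℝ (Fin d) → ℝ}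
    (hp : ContDiff ℝ 1 p) (hpos : ∀ x, 0 < p x) :
    ∫⁻ x, ENNReal.ofReal (fisherDensity (gaussMeasure d σ2) (fun y => p y / gaussDensity d σ2 y) x)
        ∂(gaussMeasure d σ2) =
      ENNReal.ofReal σ2 *
        ∫⁻ x, ENNReal.ofReal (‖gradient (fun y => log (p y)) x + (1 / σ2) • x‖ ^ 2 * p x) := by
  have hφ_pos := gaussDensity_pos (d := d) hσ2
  have hf : ContDiff ℝ 1 fun y => p y / gaussDensity d σ2 y :=
    hp.div contDiff_gaussDensity fun x => (hφ_pos x).ne'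
  have hf_pos x : 0 < p x / gaussDensity d σ2 x := div_pos (hpos x) (hφ_pos x)
  rw [lintegral_gaussMeasure hσ2 (continuous_fisherDensity hf hf_pos).measurable,
    ← lintegral_const_mul' _ _ ENNReal.ofReal_ne_top]
  congr with x
  rw [fisherDensity_gaussMeasure hσ2 (hf.differentiable one_ne_zero x) (hf_pos x).ne',
    gradient_log_div_gaussDensity hσ2 (hp.differentiable one_ne_zero) hpos,
    ← ENNReal.ofReal_mul hσ2.le]
  have := (hφ_pos x).ne'
  field_simp

end GaussMeasure

lemma isProbabilityMeasure_withDensity_ofReal {α : Type*} [MeasurableSpace α] {ν : Measure α}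
    {g : α → ℝ} (hg_nonneg : ∀ x, 0 ≤ g x) (hg_one : ∫ x, g x ∂ν = 1) :
    IsProbabilityMeasure (ν.withDensity fun x => ENNReal.ofReal (g x)) := by
  have hg_int : Integrable g ν := .of_integral_ne_zero (by simp [hg_one])
  refine ⟨?_⟩
  rw [withDensity_apply _ .univ, Measure.restrict_univ,
    ← ofReal_integral_eq_lintegral_ofReal hg_int (ae_of_all _ hg_nonneg), hg_one,
    ENNReal.ofReal_one]

lemma KL_eq_klDiv {E : Type*} [MeasurableSpace E] (μ ν : Measure E) [IsProbabilityMeasure μ]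
    [IsProbabilityMeasure ν] : KL μ ν = klDiv μ ν := by
  rw [klDiv, KL]
  simp [llr_def]

/-- Gaussian logarithmic Sobolev inequality: for a `C¹` positive probability
density `p` on `ℝ^d`, the KL divergence of the measure of density `p` from `γ_{σ²}` is at most
`(σ²/2)` times its relative Fisher information
`∫ ‖∇ log p(x) + x/σ²‖² p(x) dx`, the inequality holding in `[0,∞]`. -/
theorem gaussian_logSobolev (d : ℕ) (hd : 1 ≤ d) (σ2 : ℝ) (hσ2 : 0 < σ2)
    (p : EuclideanSpace ℝ (Fin d) → ℝ) (hp : ContDiff ℝ 1 p) (hpos : ∀ x, 0 < p x)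
    (hint : ∫ x, p x = 1) :
    KL (volume.withDensity fun x => ENNReal.ofReal (p x)) (gaussMeasure d σ2) ≤
      ENNReal.ofReal (σ2 / 2) *
        ∫⁻ x, ENNReal.ofReal
          (‖gradient (fun y => Real.log (p y)) x + (1 / σ2) • x‖ ^ 2 * p x) := by
  have := isGaussian_gaussMeasure (d := d) hσ2
  have := isProbabilityMeasure_withDensity_ofReal (fun x => (hpos x).le) hint
  set f : EuclideanSpace ℝ (Fin d) → ℝ := fun x => p x / gaussDensity d σ2 x
  have hf : ContDiff ℝ 1 f := hp.div contDiff_gaussDensity fun x => (gaussDensity_pos hσ2 x).ne'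
  have hf_pos x : 0 < f x := div_pos (hpos x) (gaussDensity_pos hσ2 x)
  have hφf x : gaussDensity d σ2 x * f x = p x := mul_div_cancel₀ _ (gaussDensity_pos hσ2 x).ne'
  have hf_one : ∫ x, f x ∂(gaussMeasure d σ2) = 1 := by
    simpa only [integral_gaussMeasure hσ2, smul_eq_mul, hφf]
  calc KL (volume.withDensity fun x => ENNReal.ofReal (p x)) (gaussMeasure d σ2)
    _ = klDiv ((gaussMeasure d σ2).withDensity fun x => ENNReal.ofReal (f x))
        (gaussMeasure d σ2) := by
      simp only [KL_eq_klDiv, withDensity_gaussMeasure hσ2 hf.continuous.measurable, hφf]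
    _ ≤ ENNReal.ofReal (1 / 2) *
        ∫⁻ x, ENNReal.ofReal (fisherDensity (gaussMeasure d σ2) f x) ∂(gaussMeasure d σ2) :=
      klDiv_withDensity_le_lintegral_fisherDensity (integral_id_gaussMeasure hσ2) hf hf_pos hf_one
    _ = _ := by
      rw [lintegral_fisherDensity_div_gaussDensity hσ2 hp hpos, ← mul_assoc,
        ← ENNReal.ofReal_mul one_half_pos.le, one_div_mul_eq_div]
end
end

section
/- Let μ₁, μ₂ ∈ ℝ^d and let Σ₁, Σ₂ ∈ ℝ^{d×d} be symmetric positive definite. Then the squared 2-Wasserstein distance satisfies W₂²(N(μ₁, Σ₁), N(μ₂, Σ₂)) = ‖μ₂ − μ₁‖² + Tr( Σ₁ + Σ₂ − 2 (Σ₂^{1/2} Σ₁ Σ₂^{1/2})^{1/2} ), where A^{1/2} denotes the unique symmetric positive semidefinite square root of a symmetric positive semidefinite matrix A. -/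
open MeasureTheory Real Set Matrix
open scoped ENNReal

noncomputable section

/-- Density of the Gaussian measure `N(μ₀, Σ)` on `ℝ^d`. -/
def gaussDensityM (d : ℕ) (μ0 : EuclideanSpace ℝ (Fin d)) (S : Matrix (Fin d) (Fin d) ℝ)
    (x : EuclideanSpace ℝ (Fin d)) : ℝ :=
  (2 * π) ^ (-(d : ℝ) / 2) * S.det ^ (-(1 : ℝ) / 2) *
    Real.exp (-(1 / 2) * ∑ i, ∑ j, (x i - μ0 i) * S⁻¹ i j * (x j - μ0 j))

/-- The Gaussian measure `N(μ₀, Σ)` on `ℝ^d`. -/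
def gaussMeasureM (d : ℕ) (μ0 : EuclideanSpace ℝ (Fin d)) (S : Matrix (Fin d) (Fin d) ℝ) :
    Measure (EuclideanSpace ℝ (Fin d)) :=
  volume.withDensity fun x => ENNReal.ofReal (gaussDensityM d μ0 S x)

/-- The squared 2-Wasserstein distance: infimum of `∫ ‖x−y‖² dπ` over all couplings `π`
of `μ` and `ν`. -/
def W2sq (d : ℕ) (μ ν : Measure (EuclideanSpace ℝ (Fin d))) : ℝ≥0∞ :=
  ⨅ (c : Measure (EuclideanSpace ℝ (Fin d) × EuclideanSpace ℝ (Fin d)))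
    (_ : c.map Prod.fst = μ) (_ : c.map Prod.snd = ν),
      ∫⁻ p, ENNReal.ofReal (‖p.1 - p.2‖ ^ 2) ∂c

/-!
For positive definite `T`, Young's inequality `2⟨u, v⟩ ≤ ⟨u, T u⟩ + ⟨v, T⁻¹ v⟩`, integrated over
the centered coordinates of a coupling of `μ` and `ν`, bounds its cost below by
`‖𝔼μ - 𝔼ν‖² + Tr((1 - T) Cov μ) + Tr((1 - T⁻¹) Cov ν)`, and the coupling `(x, a + T x)` attains
this bound. A nondegenerate Gaussian measure is pushed forward to another one by such an affine map:
if `Q Qᵀ = Σ₂` and `R² = Qᵀ Σ₁ Q`, then `T = Q R⁻¹ Qᵀ` is positive definite and satisfies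
`T Σ₁ T = Σ₂`, while `Tr(T Σ₁) = Tr R`.
-/

section QuadraticForm

variable {ι : Type*} [Fintype ι] [DecidableEq ι]

lemma two_mul_dotProduct_le_of_posDef {T : Matrix ι ι ℝ} (hT : T.PosDef) (u v : ι → ℝ) :
    2 * (u ⬝ᵥ v) ≤ u ⬝ᵥ T *ᵥ u + v ⬝ᵥ T⁻¹ *ᵥ v := by
  have hTv : T *ᵥ (T⁻¹ *ᵥ v) = v := by
    rw [mulVec_mulVec, mul_nonsing_inv _ hT.det_pos.ne'.isUnit, one_mulVec]
  have hcross : (T⁻¹ *ᵥ v) ⬝ᵥ T *ᵥ u = u ⬝ᵥ v := by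
    rw [dotProduct_mulVec, ← mulVec_transpose, ← conjTranspose_eq_transpose_of_trivial,
      hT.isHermitian.eq, hTv, dotProduct_comm]
  have hsq : 0 ≤ (u - T⁻¹ *ᵥ v) ⬝ᵥ T *ᵥ (u - T⁻¹ *ᵥ v) := by
    simpa using hT.posSemidef.dotProduct_mulVec_nonneg (u - T⁻¹ *ᵥ v)
  rw [mulVec_sub, hTv, sub_dotProduct, dotProduct_sub, dotProduct_sub, hcross,
    dotProduct_comm (T⁻¹ *ᵥ v) v] at hsq
  linarith

/-- With `u = x - 𝔼 X` and `v = y - 𝔼 Y`, the left-hand side is a pair of Kantorovich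
potentials for the quadratic cost. -/
lemma dotProduct_mulVec_add_le_dotProduct_sub {T : Matrix ι ι ℝ} (hT : T.PosDef) (u v : ι → ℝ) :
    u ⬝ᵥ (1 - T) *ᵥ u + v ⬝ᵥ (1 - T⁻¹) *ᵥ v ≤ (u - v) ⬝ᵥ (u - v) := by
  have hYoung := two_mul_dotProduct_le_of_posDef hT u v
  simp only [sub_mulVec, one_mulVec, dotProduct_sub, sub_dotProduct, dotProduct_comm v u]
  linarith

end QuadraticForm

section CovarianceMatrix

open ProbabilityTheory

variable {Ω ι : Type*} [MeasurableSpace Ω] {P : Measure Ω} {X Y : Ω → EuclideanSpace ℝ ι}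

/-- The covariance matrix of a random vector `X` under `P`. For a measure `μ` on the Euclidean
space itself, take `X = id`. -/
def covarianceMatrix (X : Ω → EuclideanSpace ℝ ι) (P : Measure Ω) : Matrix ι ι ℝ :=
  .of fun i j ↦ cov[fun ω ↦ X ω i, fun ω ↦ X ω j; P]

lemma covarianceMatrix_map [Finite ι] (hX : AEMeasurable X P) :
    covarianceMatrix id (P.map X) = covarianceMatrix X P := by
  ext i j
  exact covariance_map_fun (by fun_prop) (by fun_prop) hX

variable [Fintype ι]

lemma integrable_dotProduct_mulVec (hX : MemLp X 2 P) (M : Matrix ι ι ℝ) :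
    Integrable (fun ω ↦ (X ω).ofLp ⬝ᵥ M *ᵥ (X ω).ofLp) P := by
  simp only [dotProduct, mulVec, Finset.mul_sum]
  exact integrable_finsetSum _ fun i _ ↦ integrable_finsetSum _ fun j _ ↦
    (hX.eval_piLp i).integrable_mul ((hX.eval_piLp j).const_mul (M i j))

lemma integral_dotProduct_mulVec_sub_integral [IsFiniteMeasure P] (hX : MemLp X 2 P)
    (M : Matrix ι ι ℝ) :
    ∫ ω, (X ω - P[X]).ofLp ⬝ᵥ M *ᵥ (X ω - P[X]).ofLp ∂P = (M * covarianceMatrix X P).trace := by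
  have hmean (i : ι) : P[X] i = ∫ ω, X ω i ∂P :=
    eval_integral_piLp (fun i ↦ (hX.eval_piLp i).integrable one_le_two) i
  have hcenter (i : ι) : MemLp (fun ω ↦ X ω i - ∫ ω', X ω' i ∂P) 2 P :=
    (hX.eval_piLp i).sub (memLp_const _)
  have hterm (i j : ι) : Integrable (fun ω ↦ (X ω i - ∫ ω', X ω' i ∂P) *
      (M i j * (X ω j - ∫ ω', X ω' j ∂P))) P :=
    (hcenter i).integrable_mul ((hcenter j).const_mul (M i j))
  simp only [Matrix.trace, diag_apply, mul_apply, dotProduct, mulVec, Finset.mul_sum,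
    PiLp.sub_apply, hmean]
  rw [integral_finsetSum _ fun i _ ↦ integrable_finsetSum _ fun j _ ↦ hterm i j]
  refine Finset.sum_congr rfl fun i _ ↦ ?_
  rw [integral_finsetSum _ fun j _ ↦ hterm i j]
  refine Finset.sum_congr rfl fun j _ ↦ ?_
  rw [covarianceMatrix, of_apply, covariance_comm, covariance, ← integral_const_mul]
  exact integral_congr_ae (ae_of_all _ fun ω ↦ mul_left_comm _ _ _)

lemma integral_norm_sq_eq_add_trace [IsProbabilityMeasure P] (hX : MemLp X 2 P) :
    ∫ ω, ‖X ω‖ ^ 2 ∂P = ‖P[X]‖ ^ 2 + (covarianceMatrix X P).trace := by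
  have hmean (i : ι) : P[X] i = ∫ ω, X ω i ∂P :=
    eval_integral_piLp (fun i ↦ (hX.eval_piLp i).integrable one_le_two) i
  simp only [EuclideanSpace.real_norm_sq_eq, hmean, Matrix.trace, diag_apply, covarianceMatrix,
    of_apply]
  rw [integral_finsetSum _ fun i _ ↦ (hX.eval_piLp i).integrable_sq, ← Finset.sum_add_distrib]
  refine Finset.sum_congr rfl fun i _ ↦ ?_
  rw [covariance_eq_sub (hX.eval_piLp i) (hX.eval_piLp i)]
  simp only [Pi.mul_apply, ← sq]
  ring

lemma lintegral_norm_sq_eq_add_trace [IsProbabilityMeasure P] (hX : MemLp X 2 P) :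
    ∫⁻ ω, ENNReal.ofReal (‖X ω‖ ^ 2) ∂P =
      ENNReal.ofReal (‖P[X]‖ ^ 2 + (covarianceMatrix X P).trace) := by
  rw [← integral_norm_sq_eq_add_trace hX, ofReal_integral_eq_lintegral_ofReal
    ((memLp_two_iff_integrable_sq_norm hX.1).1 hX) (ae_of_all _ fun _ ↦ sq_nonneg _)]

variable [DecidableEq ι]

lemma covarianceMatrix_multivariateGaussian (m : EuclideanSpace ℝ ι) {S : Matrix ι ι ℝ}
    (hS : S.PosSemidef) : covarianceMatrix id (multivariateGaussian m S) = S :=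
  Matrix.ext fun i j ↦ covariance_eval_multivariateGaussian hS i j

lemma memLp_const_add_toEuclideanCLM [IsFiniteMeasure P] (hX : MemLp X 2 P)
    (a : EuclideanSpace ℝ ι) (A : Matrix ι ι ℝ) :
    MemLp (fun ω ↦ a + toEuclideanCLM (𝕜 := ℝ) A (X ω)) 2 P :=
  (memLp_const a).add ((toEuclideanCLM (𝕜 := ℝ) A).comp_memLp' hX)

lemma integral_const_add_toEuclideanCLM [IsProbabilityMeasure P] (hX : Integrable X P)
    (a : EuclideanSpace ℝ ι) (A : Matrix ι ι ℝ) :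
    ∫ ω, a + toEuclideanCLM (𝕜 := ℝ) A (X ω) ∂P = a + toEuclideanCLM (𝕜 := ℝ) A P[X] := by
  rw [integral_add (integrable_const a) ((toEuclideanCLM (𝕜 := ℝ) A).integrable_comp hX),
    ContinuousLinearMap.integral_comp_comm _ hX, integral_const, probReal_univ, one_smul]

lemma covarianceMatrix_const_add_toEuclideanCLM [IsProbabilityMeasure P] (hX : MemLp X 2 P)
    (a : EuclideanSpace ℝ ι) (A : Matrix ι ι ℝ) :
    covarianceMatrix (fun ω ↦ a + toEuclideanCLM (𝕜 := ℝ) A (X ω)) P =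
      A * covarianceMatrix X P * Aᵀ := by
  have hterm (i k : ι) : MemLp (fun ω ↦ A i k * X ω k) 2 P := (hX.eval_piLp k).const_mul _
  have hint (i : ι) : Integrable (fun ω ↦ ∑ k, A i k * X ω k) P :=
    integrable_finsetSum _ fun k _ ↦ (hterm i k).integrable one_le_two
  ext i j
  simp only [covarianceMatrix, of_apply, PiLp.add_apply, ofLp_toEuclideanCLM, mulVec, dotProduct]
  rw [covariance_const_add_left (hint i), covariance_const_add_right (hint j),
    covariance_fun_sum_fun_sum (hterm i) (hterm j)]
  simp only [covariance_const_mul_left, covariance_const_mul_right, mul_apply, of_apply,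
    transpose_apply, Finset.sum_mul]
  rw [Finset.sum_comm]
  exact Finset.sum_congr rfl fun l _ ↦ Finset.sum_congr rfl fun k _ ↦ by ring

lemma trace_add_trace_le_trace_covarianceMatrix_sub [IsFiniteMeasure P] (hX : MemLp X 2 P)
    (hY : MemLp Y 2 P) {T : Matrix ι ι ℝ} (hT : T.PosDef) :
    ((1 - T) * covarianceMatrix X P).trace + ((1 - T⁻¹) * covarianceMatrix Y P).trace ≤
      (covarianceMatrix (X - Y) P).trace := by
  have hquad {Z : Ω → EuclideanSpace ℝ ι} (hZ : MemLp Z 2 P) (M : Matrix ι ι ℝ) :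
      Integrable (fun ω ↦ (Z ω - P[Z]).ofLp ⬝ᵥ M *ᵥ (Z ω - P[Z]).ofLp) P := by
    have hcenter : MemLp (fun ω ↦ Z ω - P[Z]) 2 P := hZ.sub (memLp_const P[Z])
    exact integrable_dotProduct_mulVec hcenter M
  have hmean : ∫ ω, X ω - Y ω ∂P = P[X] - P[Y] :=
    integral_sub (hX.integrable one_le_two) (hY.integrable one_le_two)
  calc ((1 - T) * covarianceMatrix X P).trace + ((1 - T⁻¹) * covarianceMatrix Y P).trace
      = ∫ ω, (X ω - P[X]).ofLp ⬝ᵥ (1 - T) *ᵥ (X ω - P[X]).ofLp +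
          (Y ω - P[Y]).ofLp ⬝ᵥ (1 - T⁻¹) *ᵥ (Y ω - P[Y]).ofLp ∂P := by
        rw [integral_add (hquad hX _) (hquad hY _), integral_dotProduct_mulVec_sub_integral hX,
          integral_dotProduct_mulVec_sub_integral hY]
    _ ≤ ∫ ω, ((X - Y) ω - P[X - Y]).ofLp ⬝ᵥ (1 : Matrix ι ι ℝ) *ᵥ
          ((X - Y) ω - P[X - Y]).ofLp ∂P := by
        refine integral_mono ((hquad hX _).add (hquad hY _)) (hquad (hX.sub hY) 1) fun ω ↦ ?_
        simp only [one_mulVec, Pi.sub_apply, hmean]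
        rw [sub_sub_sub_comm (X ω)]
        exact dotProduct_mulVec_add_le_dotProduct_sub hT _ _
    _ = (covarianceMatrix (X - Y) P).trace := by
        rw [integral_dotProduct_mulVec_sub_integral (hX.sub hY), Matrix.one_mul]

end CovarianceMatrix

section Wasserstein

variable {d : ℕ} {μ ν : Measure (EuclideanSpace ℝ (Fin d))}

lemma W2sq_map_map_le {Ω : Type*} [MeasurableSpace Ω] {P : Measure Ω}
    {X Y : Ω → EuclideanSpace ℝ (Fin d)} (hX : Measurable X) (hY : Measurable Y) :
    W2sq d (P.map X) (P.map Y) ≤ ∫⁻ ω, ENNReal.ofReal (‖X ω - Y ω‖ ^ 2) ∂P := by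
  have hXY : Measurable fun ω ↦ (X ω, Y ω) := hX.prodMk hY
  unfold W2sq
  refine iInf_le_of_le (P.map fun ω ↦ (X ω, Y ω)) (iInf_le_of_le ?_ (iInf_le_of_le ?_ ?_))
  · exact Measure.map_map measurable_fst hXY
  · exact Measure.map_map measurable_snd hXY
  · exact (lintegral_map (by fun_prop) hXY).le

lemma ofReal_le_W2sq [IsProbabilityMeasure μ] (hμ : MemLp id 2 μ) (hν : MemLp id 2 ν)
    {T : Matrix (Fin d) (Fin d) ℝ} (hT : T.PosDef) :
    ENNReal.ofReal (‖∫ x, x ∂μ - ∫ y, y ∂ν‖ ^ 2 + (((1 - T) * covarianceMatrix id μ).trace +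
      ((1 - T⁻¹) * covarianceMatrix id ν).trace)) ≤ W2sq d μ ν := by
  simp only [W2sq, le_iInf_iff]
  rintro c rfl rfl
  have : IsProbabilityMeasure c := Measure.isProbabilityMeasure_of_map Prod.fst
  have hX : MemLp Prod.fst 2 c := hμ.comp_of_map measurable_fst.aemeasurable
  have hY : MemLp Prod.snd 2 c := hν.comp_of_map measurable_snd.aemeasurable
  rw [integral_map (by fun_prop) (by fun_prop), integral_map (by fun_prop) (by fun_prop),
    ← integral_sub (hX.integrable one_le_two) (hY.integrable one_le_two),
    covarianceMatrix_map (by fun_prop), covarianceMatrix_map (by fun_prop)]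
  refine (ENNReal.ofReal_le_ofReal (add_le_add le_rfl
    (trace_add_trace_le_trace_covarianceMatrix_sub hX hY hT))).trans_eq ?_
  exact (lintegral_norm_sq_eq_add_trace (hX.sub hY)).symm

lemma W2sq_map_const_add_toEuclideanCLM_le [IsProbabilityMeasure μ] (hμ : MemLp id 2 μ)
    (a : EuclideanSpace ℝ (Fin d)) (A : Matrix (Fin d) (Fin d) ℝ) :
    W2sq d μ (μ.map fun x ↦ a + toEuclideanCLM (𝕜 := ℝ) A x) ≤
      ENNReal.ofReal (‖∫ x, x ∂μ - (a + toEuclideanCLM (𝕜 := ℝ) A (∫ x, x ∂μ))‖ ^ 2 +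
        ((1 - A) * covarianceMatrix id μ * (1 - A)ᵀ).trace) := by
  have hdisp (x : EuclideanSpace ℝ (Fin d)) : x - (a + toEuclideanCLM (𝕜 := ℝ) A x) =
      -a + toEuclideanCLM (𝕜 := ℝ) (1 - A) x := by
    rw [map_sub, map_one, _root_.sub_apply, one_apply_eq_self]
    abel
  calc W2sq d μ (μ.map fun x ↦ a + toEuclideanCLM (𝕜 := ℝ) A x)
      ≤ ∫⁻ x, ENNReal.ofReal (‖x - (a + toEuclideanCLM (𝕜 := ℝ) A x)‖ ^ 2) ∂μ := by
        have hcoupling := W2sq_map_map_le (P := μ) (Y := fun x ↦ a + toEuclideanCLM (𝕜 := ℝ) A x)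
          measurable_id (by fun_prop)
        rwa [Measure.map_id] at hcoupling
    _ = ENNReal.ofReal (‖-a + toEuclideanCLM (𝕜 := ℝ) (1 - A) (∫ x, x ∂μ)‖ ^ 2 +
        ((1 - A) * covarianceMatrix id μ * (1 - A)ᵀ).trace) := by
        have hcost := lintegral_norm_sq_eq_add_trace
          (memLp_const_add_toEuclideanCLM hμ (-a) (1 - A))
        rw [covarianceMatrix_const_add_toEuclideanCLM hμ,
          integral_const_add_toEuclideanCLM (hμ.integrable one_le_two)] at hcost
        simpa only [hdisp, id] using hcost
    _ = _ := by rw [hdisp]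

/-- An affine map with positive definite linear part is the gradient of a convex function, hence
an optimal transport map by Brenier's theorem. -/
theorem W2sq_map_const_add_toEuclideanCLM_of_posDef [IsProbabilityMeasure μ]
    (hμ : MemLp id 2 μ) (a : EuclideanSpace ℝ (Fin d)) {T : Matrix (Fin d) (Fin d) ℝ}
    (hT : T.PosDef) :
    W2sq d μ (μ.map fun x ↦ a + toEuclideanCLM (𝕜 := ℝ) T x) =
      ENNReal.ofReal (‖∫ x, x ∂μ - (a + toEuclideanCLM (𝕜 := ℝ) T (∫ x, x ∂μ))‖ ^ 2 +
        ((1 - T) * covarianceMatrix id μ * (1 - T)).trace) := by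
  have hTt : Tᵀ = T := by rw [← conjTranspose_eq_transpose_of_trivial, hT.isHermitian.eq]
  have hmean := integral_const_add_toEuclideanCLM (hμ.integrable one_le_two) a T
  have hcov := covarianceMatrix_const_add_toEuclideanCLM hμ a T
  have hTinv : (1 - T⁻¹) * T = -(1 - T) := by
    rw [Matrix.sub_mul, nonsing_inv_mul _ hT.det_pos.ne'.isUnit, Matrix.one_mul, neg_sub]
  have hdual (S : Matrix (Fin d) (Fin d) ℝ) :
      (1 - T) * S + (1 - T⁻¹) * (T * S * T) = (1 - T) * S * (1 - T) := by
    rw [Matrix.mul_assoc T, ← Matrix.mul_assoc (1 - T⁻¹), hTinv]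
    noncomm_ring
  apply le_antisymm
  · simpa only [transpose_sub, transpose_one, hTt] using W2sq_map_const_add_toEuclideanCLM_le hμ a T
  · have hν : MemLp id 2 (μ.map fun x ↦ a + toEuclideanCLM (𝕜 := ℝ) T x) :=
      (memLp_map_measure_iff (by fun_prop) (by fun_prop)).2
        (memLp_const_add_toEuclideanCLM hμ a T)
    simp only [id, hTt] at hmean hcov
    have hle := ofReal_le_W2sq hμ hν hT
    rwa [integral_map (by fun_prop) (by fun_prop), covarianceMatrix_map (by fun_prop), hmean,
      hcov, ← trace_add, hdual] at hle

end Wasserstein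

section ChangeOfVariables

variable {E : Type*} [NormedAddCommGroup E] [NormedSpace ℝ E] [FiniteDimensional ℝ E]
  [MeasurableSpace E] [BorelSpace E]

lemma map_withDensity_abs_det_mul_comp (μ : Measure E) [μ.IsAddHaarMeasure] {φ : E → E}
    {φ' : E → E →L[ℝ] E} (hφ : φ.Bijective) (hφ' : ∀ x, HasFDerivAt φ (φ' x) x) (g : E → ℝ≥0∞) :
    (μ.withDensity fun x ↦ ENNReal.ofReal |(φ' x).det| * g (φ x)).map φ = μ.withDensity g := by
  have hmeas : Measurable φ :=
    (continuous_iff_continuousAt.2 fun x ↦ (hφ' x).continuousAt).measurable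
  ext s hs
  rw [Measure.map_apply hmeas hs, withDensity_apply _ (hmeas hs), withDensity_apply _ hs,
    ← lintegral_image_eq_lintegral_abs_det_fderiv_mul μ (hmeas hs)
      (fun x _ ↦ (hφ' x).hasFDerivWithinAt) hφ.injective.injOn,
    image_preimage_eq _ hφ.surjective]

end ChangeOfVariables

section StdGaussian

open ProbabilityTheory

variable {E : Type*} [NormedAddCommGroup E] [InnerProductSpace ℝ E] [FiniteDimensional ℝ E]
  [MeasurableSpace E] [BorelSpace E]

lemma integrable_exp_neg_half_norm_sq :
    Integrable fun x : E ↦ Real.exp (-(1 / 2) * ‖x‖ ^ 2) := by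
  refine .of_integral_ne_zero ?_
  rw [GaussianFourier.integral_rexp_neg_mul_sq_norm one_half_pos]
  positivity

lemma integral_exp_mul_cexp_inner (t : E) :
    ∫ x : E, (Real.exp (-(1 / 2) * ‖x‖ ^ 2) : ℂ) * Complex.exp (inner ℝ x t * Complex.I) =
      ((2 * π) ^ (Module.finrank ℝ E / 2 : ℝ) : ℝ) * Complex.exp (-‖t‖ ^ 2 / 2) := by
  have hfourier := GaussianFourier.integral_cexp_neg_mul_sq_norm_add
    (show 0 < (1 / 2 : ℂ).re by norm_num) Complex.I t
  convert hfourier using 1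
  · refine integral_congr_ae (ae_of_all _ fun x ↦ ?_)
    simp only [Complex.ofReal_exp, ← Complex.exp_add, real_inner_comm t x]
    push_cast
    ring_nf
  · rw [Complex.ofReal_cpow (by positivity), Complex.I_sq]
    push_cast
    ring_nf

lemma stdGaussian_eq_withDensity :
    stdGaussian E = volume.withDensity fun x ↦ ENNReal.ofReal
      ((2 * π) ^ (-(Module.finrank ℝ E : ℝ) / 2) * Real.exp (-(1 / 2) * ‖x‖ ^ 2)) := by
  have hfinite := isFiniteMeasure_withDensity_ofReal ((integrable_exp_neg_half_norm_sq (E := E)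
    ).const_mul ((2 * π) ^ (-(Module.finrank ℝ E : ℝ) / 2))).hasFiniteIntegral
  have hnormalize : (2 * π) ^ (-(Module.finrank ℝ E : ℝ) / 2) *
      (2 * π) ^ (Module.finrank ℝ E / 2 : ℝ) = 1 := by
    rw [← Real.rpow_add (by positivity), neg_div, neg_add_cancel, Real.rpow_zero]
  refine Measure.ext_of_charFun (funext fun t ↦ ?_)
  rw [charFun_stdGaussian, charFun_apply, integral_withDensity_eq_integral_toReal_smul
    (by fun_prop) (ae_of_all _ fun _ ↦ ENNReal.ofReal_lt_top)]
  simp only [ENNReal.toReal_ofReal (mul_nonneg (Real.rpow_nonneg two_pi_pos.le _)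
    (Real.exp_nonneg _)), Complex.real_smul, Complex.ofReal_mul, mul_assoc]
  rw [integral_const_mul, integral_exp_mul_cexp_inner, ← mul_assoc, ← Complex.ofReal_mul,
    hnormalize, Complex.ofReal_one, one_mul]

end StdGaussian

section CongruenceTransform

variable {ι : Type*} [Fintype ι] [DecidableEq ι] {A S : Matrix ι ι ℝ}

lemma det_toEuclideanCLM (A : Matrix ι ι ℝ) : (toEuclideanCLM (𝕜 := ℝ) A).det = A.det := by
  rw [ContinuousLinearMap.det, coe_toEuclideanCLM_eq_toEuclideanLin,
    toEuclideanLin_eq_toLin_orthonormal, LinearMap.det_toLin]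

lemma abs_det_mul_det_conj_rpow_neg_half (hA : IsUnit A.det) (hS : 0 ≤ S.det) :
    |A.det| * (A * S * Aᵀ).det ^ (-(1 : ℝ) / 2) = S.det ^ (-(1 : ℝ) / 2) := by
  have hAdet : 0 < |A.det| := abs_pos.2 hA.ne_zero
  have hdet : (A * S * Aᵀ).det = |A.det| ^ (2 : ℝ) * S.det := by
    rw [det_mul, det_mul, det_transpose, Real.rpow_two, sq_abs]
    ring
  rw [hdet, Real.mul_rpow (by positivity) hS, ← Real.rpow_mul hAdet.le, ← mul_assoc]
  norm_num [Real.rpow_neg_one, hAdet.ne']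

lemma dotProduct_inv_conj_mulVec (hA : IsUnit A.det) (S : Matrix ι ι ℝ) (u : ι → ℝ) :
    (A *ᵥ u) ⬝ᵥ (A * S * Aᵀ)⁻¹ *ᵥ (A *ᵥ u) = u ⬝ᵥ S⁻¹ *ᵥ u := by
  have hinv : Aᵀ * ((A * S * Aᵀ)⁻¹ * A) = S⁻¹ := by
    rw [Matrix.mul_inv_rev, Matrix.mul_inv_rev, Matrix.mul_assoc, Matrix.mul_assoc,
      nonsing_inv_mul _ hA, Matrix.mul_one,
      mul_nonsing_inv_cancel_left _ _ (by rwa [det_transpose])]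
  rw [← hinv, ← mulVec_mulVec, ← mulVec_mulVec, dotProduct_mulVec u, vecMul_transpose]

end CongruenceTransform

section GaussianMeasure

open ProbabilityTheory

variable {d : ℕ} {A S : Matrix (Fin d) (Fin d) ℝ}

lemma gaussDensityM_eq_dotProduct (m : EuclideanSpace ℝ (Fin d)) (S : Matrix (Fin d) (Fin d) ℝ)
    (x : EuclideanSpace ℝ (Fin d)) :
    gaussDensityM d m S x = (2 * π) ^ (-(d : ℝ) / 2) * S.det ^ (-(1 : ℝ) / 2) *
      Real.exp (-(1 / 2) * ((x - m).ofLp ⬝ᵥ S⁻¹ *ᵥ (x - m).ofLp)) := by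
  simp only [gaussDensityM, dotProduct, mulVec, PiLp.sub_apply, Finset.mul_sum, mul_assoc]

lemma gaussDensityM_eq_abs_det_mul (hA : IsUnit A.det) (hS : 0 ≤ S.det)
    (a m x : EuclideanSpace ℝ (Fin d)) :
    gaussDensityM d m S x = |A.det| * gaussDensityM d (a + toEuclideanCLM (𝕜 := ℝ) A m)
      (A * S * Aᵀ) (a + toEuclideanCLM (𝕜 := ℝ) A x) := by
  rw [gaussDensityM_eq_dotProduct, gaussDensityM_eq_dotProduct, add_sub_add_left_eq_sub, ← map_sub,
    ofLp_toEuclideanCLM, dotProduct_inv_conj_mulVec hA,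
    ← abs_det_mul_det_conj_rpow_neg_half hA hS]
  ring

lemma gaussMeasureM_map_const_add_toEuclideanCLM (hA : IsUnit A.det) (hS : 0 ≤ S.det)
    (a m : EuclideanSpace ℝ (Fin d)) :
    (gaussMeasureM d m S).map (fun x ↦ a + toEuclideanCLM (𝕜 := ℝ) A x) =
      gaussMeasureM d (a + toEuclideanCLM (𝕜 := ℝ) A m) (A * S * Aᵀ) := by
  have hbij : Function.Bijective fun x ↦ a + toEuclideanCLM (𝕜 := ℝ) A x :=
    (Equiv.addLeft a).bijective.comp (ContinuousLinearMap.isUnit_iff_bijective.1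
      (((isUnit_iff_isUnit_det A).2 hA).map (toEuclideanCLM (𝕜 := ℝ))))
  have hpush := map_withDensity_abs_det_mul_comp volume hbij
    (fun x ↦ (toEuclideanCLM (𝕜 := ℝ) A).hasFDerivAt.const_add a)
    (fun y ↦ ENNReal.ofReal (gaussDensityM d (a + toEuclideanCLM (𝕜 := ℝ) A m) (A * S * Aᵀ) y))
  simpa only [gaussMeasureM, det_toEuclideanCLM, ← ENNReal.ofReal_mul (abs_nonneg _),
    ← gaussDensityM_eq_abs_det_mul hA hS] using hpush

lemma stdGaussian_eq_gaussMeasureM :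
    stdGaussian (EuclideanSpace ℝ (Fin d)) = gaussMeasureM d 0 1 := by
  rw [stdGaussian_eq_withDensity, gaussMeasureM]
  congr with x
  rw [gaussDensityM_eq_dotProduct, finrank_euclideanSpace_fin, det_one, Real.one_rpow, mul_one,
    sub_zero, inv_one, one_mulVec, EuclideanSpace.real_norm_sq_eq]
  simp only [dotProduct, sq]

open scoped MatrixOrder Matrix.Norms.L2Operator in
lemma gaussMeasureM_eq_multivariateGaussian (m : EuclideanSpace ℝ (Fin d)) (hS : S.PosDef) :
    gaussMeasureM d m S = multivariateGaussian m S := by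
  have hsymm : (CFC.sqrt S)ᵀ = CFC.sqrt S := by
    rw [← conjTranspose_eq_transpose_of_trivial]
    exact (nonneg_iff_posSemidef.1 (CFC.sqrt_nonneg S)).isHermitian
  have hsq : CFC.sqrt S * CFC.sqrt S = S :=
    CFC.sqrt_mul_sqrt_self S (nonneg_iff_posSemidef.2 hS.posSemidef)
  have hunit : IsUnit (CFC.sqrt S).det := by
    refine isUnit_of_mul_isUnit_left (y := (CFC.sqrt S).det) ?_
    rw [← det_mul, hsq]
    exact hS.det_pos.ne'.isUnit
  rw [multivariateGaussian, stdGaussian_eq_gaussMeasureM,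
    gaussMeasureM_map_const_add_toEuclideanCLM hunit (by simp), map_zero, add_zero,
    Matrix.mul_one, hsymm, hsq]

end GaussianMeasure

section OptimalMap

variable {ι : Type*} [Fintype ι] [DecidableEq ι] {S Q R : Matrix ι ι ℝ}

lemma posDef_mul_inv_mul_transpose (hQ : IsUnit Q) (hR : R.PosDef) :
    (Q * R⁻¹ * Qᵀ).PosDef := by
  rw [← conjTranspose_eq_transpose_of_trivial]
  exact (IsUnit.posDef_star_right_conjugate_iff hQ).2 hR.inv

lemma conj_mul_inv_mul_transpose (hR : IsUnit R.det) (hRR : R * R = Qᵀ * S * Q) :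
    Q * R⁻¹ * Qᵀ * S * (Q * R⁻¹ * Qᵀ) = Q * Qᵀ := by
  calc Q * R⁻¹ * Qᵀ * S * (Q * R⁻¹ * Qᵀ) = Q * R⁻¹ * (Qᵀ * S * Q) * R⁻¹ * Qᵀ := by
        simp only [Matrix.mul_assoc]
    _ = Q * Qᵀ := by
        rw [← hRR, ← Matrix.mul_assoc, nonsing_inv_mul_cancel_right _ _ hR,
          mul_nonsing_inv_cancel_right _ _ hR]

lemma trace_mul_inv_mul_transpose_mul (hR : IsUnit R.det) (hRR : R * R = Qᵀ * S * Q) :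
    (Q * R⁻¹ * Qᵀ * S).trace = R.trace := by
  calc (Q * R⁻¹ * Qᵀ * S).trace = (R⁻¹ * (Qᵀ * S * Q)).trace := by
        rw [Matrix.mul_assoc, Matrix.mul_assoc, trace_mul_comm Q]
        simp only [Matrix.mul_assoc]
    _ = R.trace := by rw [← hRR, nonsing_inv_mul_cancel_left _ _ hR]

lemma trace_one_sub_conj (T S : Matrix ι ι ℝ) :
    ((1 - T) * S * (1 - T)).trace = (S + T * S * T).trace - 2 * (T * S).trace := by
  simp only [Matrix.sub_mul, Matrix.mul_sub, Matrix.one_mul, Matrix.mul_one, trace_sub,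
    trace_add, trace_mul_comm S T]
  ring

end OptimalMap

open ProbabilityTheory in
theorem W2sq_gaussMeasureM_conj {d : ℕ} (m₁ m₂ : EuclideanSpace ℝ (Fin d))
    {S T : Matrix (Fin d) (Fin d) ℝ} (hS : S.PosDef) (hT : T.PosDef) :
    W2sq d (gaussMeasureM d m₁ S) (gaussMeasureM d m₂ (T * S * T)) =
      ENNReal.ofReal (‖m₁ - m₂‖ ^ 2 + ((1 - T) * S * (1 - T)).trace) := by
  set a := m₂ - toEuclideanCLM (𝕜 := ℝ) T m₁
  have hm₂ : a + toEuclideanCLM (𝕜 := ℝ) T m₁ = m₂ := sub_add_cancel _ _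
  have hmap := gaussMeasureM_map_const_add_toEuclideanCLM hT.det_pos.ne'.isUnit hS.det_pos.le a m₁
  rw [hm₂, ← conjTranspose_eq_transpose_of_trivial, hT.isHermitian.eq] at hmap
  rw [← hmap, gaussMeasureM_eq_multivariateGaussian m₁ hS,
    W2sq_map_const_add_toEuclideanCLM_of_posDef IsGaussian.memLp_two_id a hT,
    integral_id_multivariateGaussian, hm₂,
    covarianceMatrix_multivariateGaussian m₁ hS.posSemidef]

theorem w2sq_gaussian_gaussian_general (d : ℕ) (μ1 μ2 : EuclideanSpace ℝ (Fin d))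
    (S1 S2 : Matrix (Fin d) (Fin d) ℝ) (hS1 : S1.PosDef) (hS2 : S2.PosDef)
    (Q : Matrix (Fin d) (Fin d) ℝ) (hQ : Q * Qᵀ = S2) (R : Matrix (Fin d) (Fin d) ℝ)
    (hR : R.PosSemidef) (hRsq : R * R = Qᵀ * S1 * Q) :
    W2sq d (gaussMeasureM d μ1 S1) (gaussMeasureM d μ2 S2) =
      ENNReal.ofReal (‖μ2 - μ1‖ ^ 2 + (S1 + S2 - (2 : ℝ) • R).trace) := by
  have hQunit : IsUnit Q.det := by
    refine isUnit_of_mul_isUnit_left (y := Qᵀ.det) ?_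
    rw [← det_mul, hQ]
    exact hS2.det_pos.ne'.isUnit
  have hRunit : IsUnit R.det := by
    refine isUnit_of_mul_isUnit_left (y := R.det) ?_
    rw [← det_mul, hRsq, det_mul, det_mul, det_transpose]
    exact (hQunit.mul hS1.det_pos.ne'.isUnit).mul hQunit
  have hT : (Q * R⁻¹ * Qᵀ).PosDef := posDef_mul_inv_mul_transpose
    ((isUnit_iff_isUnit_det Q).2 hQunit) (hR.posDef_iff_det_ne_zero.2 hRunit.ne_zero)
  have hW := W2sq_gaussMeasureM_conj μ1 μ2 hS1 hT
  rw [trace_one_sub_conj, conj_mul_inv_mul_transpose hRunit hRsq,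
    trace_mul_inv_mul_transpose_mul hRunit hRsq, hQ] at hW
  rw [hW, norm_sub_rev, trace_sub, trace_smul, smul_eq_mul]

/-- closed-form squared 2-Wasserstein distance between Gaussian measures:
`W₂²(N(μ₁,Σ₁), N(μ₂,Σ₂)) = ‖μ₂−μ₁‖² + Tr(Σ₁ + Σ₂ − 2(Σ₂^{1/2} Σ₁ Σ₂^{1/2})^{1/2})`,
where the square roots are the unique symmetric positive semidefinite square roots,
characterized here by the hypotheses on `S2sqrt` and `R`. -/
theorem w2sq_gaussian_gaussian (d : ℕ) (hd : 1 ≤ d)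
    (μ1 μ2 : EuclideanSpace ℝ (Fin d)) (S1 S2 : Matrix (Fin d) (Fin d) ℝ)
    (hS1 : S1.PosDef) (hS2 : S2.PosDef)
    (S2sqrt : Matrix (Fin d) (Fin d) ℝ) (hS2sqrt : S2sqrt.PosSemidef)
    (hS2sqrt_sq : S2sqrt * S2sqrt = S2)
    (R : Matrix (Fin d) (Fin d) ℝ) (hR : R.PosSemidef)
    (hRsq : R * R = S2sqrt * S1 * S2sqrt) :
    W2sq d (gaussMeasureM d μ1 S1) (gaussMeasureM d μ2 S2) =
      ENNReal.ofReal (‖μ2 - μ1‖ ^ 2 + (S1 + S2 - (2 : ℝ) • R).trace) := by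
  have hsymm : S2sqrtᵀ = S2sqrt := by
    rw [← conjTranspose_eq_transpose_of_trivial, hS2sqrt.isHermitian.eq]
  exact w2sq_gaussian_gaussian_general d μ1 μ2 S1 S2 hS1 hS2 S2sqrt (by rwa [hsymm]) R hR
    (by rwa [hsymm])
end
end

section
/- There exists a universal constant C > 0 (independent of d, σ, T, t, β and p₀) with the following property: for every d ≥ 1, σ > 0, T > 0, every continuous, positive, non-decreasing noise schedule β on [0,T], every t ∈ (0, T], and every probability density p₀ on ℝ^d with ∫‖x‖⁴ p₀(x) dx < ∞, the forward marginal density p_t satisfies ∫_{ℝ^d} ‖ ∇ log p_t(x) + x/σ² ‖⁴ p_t(x) dx ≤ C ( σ_t^{−4} ∫_{ℝ^d} ‖z‖⁴ dγ_d(z) + σ^{−8} ∫_{ℝ^d} ‖x‖⁴ p₀(x) dx ), where γ_d = N(0, I_d) is the standard Gaussian measure on ℝ^d. -/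
open MeasureTheory Real Set
open scoped ENNReal

noncomputable section

/-- Density of the standard Gaussian `N(0, I_d)` on `ℝ^d`. -/
def stdGaussDensity (d : ℕ) (x : EuclideanSpace ℝ (Fin d)) : ℝ :=
  (2 * π) ^ (-(d : ℝ) / 2) * Real.exp (-‖x‖ ^ 2 / 2)

/-- The standard Gaussian measure `γ_d = N(0, I_d)` on `ℝ^d`. -/
def stdGaussMeasure (d : ℕ) : Measure (EuclideanSpace ℝ (Fin d)) :=
  volume.withDensity fun x => ENNReal.ofReal (stdGaussDensity d x)

/-- `m_t = exp(−(1/(2σ²)) ∫₀^t β(s) ds)` (here `σ2 = σ²`). -/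
def mcoef (σ2 : ℝ) (β : ℝ → ℝ) (t : ℝ) : ℝ :=
  Real.exp (-(1 / (2 * σ2)) * ∫ s in (0:ℝ)..t, β s)

/-- `σ_t = (σ²(1 − m_t²))^{1/2}` (here `σ2 = σ²`). -/
def scoef (σ2 : ℝ) (β : ℝ → ℝ) (t : ℝ) : ℝ :=
  Real.sqrt (σ2 * (1 - mcoef σ2 β t ^ 2))

/-- The forward marginal density at time `t` started from the density `p0`. -/
def forwardDensity (d : ℕ) (σ2 : ℝ) (β : ℝ → ℝ) (p0 : EuclideanSpace ℝ (Fin d) → ℝ)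
    (t : ℝ) (y : EuclideanSpace ℝ (Fin d)) : ℝ :=
  ∫ x, (2 * π * scoef σ2 β t ^ 2) ^ (-(d : ℝ) / 2) *
    Real.exp (-‖y - mcoef σ2 β t • x‖ ^ 2 / (2 * scoef σ2 β t ^ 2)) * p0 x

/-!
The density `q` of `Y = A + s • Z`, with `Z` a standard Gaussian independent of `A`, satisfies
Tweedie's formula `∇ log q(y) = E[(A - Y) / s² | Y = y]`. Hence `∇ log q(Y) + r • Y` is the
conditional expectation given `Y` of `(A - Y) / s² + r • Y = (r * s - 1 / s) • Z + r • A`, and by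
Jensen's inequality its `n`-th moment is at most that of `(r * s - 1 / s) • Z + r • A`, where `Z`
and `A` decouple. For the forward process `A = m_t • X`, `s = σ_t` and `r = 1 / σ²`, so that the
coefficient of `Z` is `-m_t² / σ_t`, and `m_t ≤ 1`.
-/

section General

variable {α : Type*} {mα : MeasurableSpace α} {μ : Measure α}

theorem isProbabilityMeasure_withDensity_ofReal_s17 {f : α → ℝ} (hf : 0 ≤ᵐ[μ] f)
    (hf_int : ∫ x, f x ∂μ = 1) :
    IsProbabilityMeasure (μ.withDensity fun x => ENNReal.ofReal (f x)) := by
  have hfi : Integrable f μ := .of_integral_ne_zero (by simp [hf_int])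
  refine ⟨?_⟩
  rw [withDensity_apply _ .univ, setLIntegral_univ, ← ofReal_integral_eq_lintegral_ofReal hfi hf,
    hf_int, ENNReal.ofReal_one]

theorem enorm_integral_pow_le_lintegral_enorm_pow {F : Type*} [NormedAddCommGroup F]
    [NormedSpace ℝ F] [IsProbabilityMeasure μ] {f : α → F} (hf : AEStronglyMeasurable f μ) (n : ℕ) :
    ‖∫ x, f x ∂μ‖ₑ ^ n ≤ ∫⁻ x, ‖f x‖ₑ ^ n ∂μ := by
  obtain rfl | hn := eq_or_ne n 0
  · simp
  have hn' : (n : NNReal) ≠ 0 := Nat.cast_ne_zero.2 hn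
  calc ‖∫ x, f x ∂μ‖ₑ ^ n ≤ eLpNorm f 1 μ ^ n := by
        rw [eLpNorm_one_eq_lintegral_enorm]
        gcongr
        exact enorm_integral_le_lintegral_enorm f
    _ ≤ eLpNorm f (n : NNReal) μ ^ n := by
        gcongr
        refine eLpNorm_le_eLpNorm_of_exponent_le ?_ hf
        exact_mod_cast Nat.one_le_iff_ne_zero.2 hn
    _ = ∫⁻ x, ‖f x‖ₑ ^ n ∂μ := by
        simpa using eLpNorm_nnreal_pow_eq_lintegral (f := f) (μ := μ) hn'

theorem enorm_add_pow_le {F : Type*} [SeminormedAddGroup F] (x y : F) (n : ℕ) :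
    ‖x + y‖ₑ ^ n ≤ 2 ^ (n - 1) * (‖x‖ₑ ^ n + ‖y‖ₑ ^ n) := by
  simp only [enorm_eq_nnnorm]
  have h : ‖x + y‖₊ ^ n ≤ 2 ^ (n - 1) * (‖x‖₊ ^ n + ‖y‖₊ ^ n) := calc
    ‖x + y‖₊ ^ n ≤ (‖x‖₊ + ‖y‖₊) ^ n := by gcongr; exact nnnorm_add_le x y
    _ ≤ 2 ^ (n - 1) * (‖x‖₊ ^ n + ‖y‖₊ ^ n) := add_pow_le zero_le zero_le n
  exact_mod_cast h

theorem ofReal_norm_pow_mul {F : Type*} [SeminormedAddGroup F] (x : F) (n : ℕ) (c : ℝ) :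
    ENNReal.ofReal (‖x‖ ^ n * c) = ‖x‖ₑ ^ n * ENNReal.ofReal c := by
  rw [ENNReal.ofReal_mul (by positivity), ENNReal.ofReal_pow (norm_nonneg x), ofReal_norm]

theorem mul_exp_neg_sq_div_two_le_one (x : ℝ) : x * exp (-x ^ 2 / 2) ≤ 1 := by
  rw [neg_div, Real.exp_neg, ← div_eq_mul_inv, div_le_one (exp_pos _)]
  calc x ≤ x ^ 2 / 2 + 1 := by linarith [sq_nonneg (x - 1)]
    _ ≤ exp (x ^ 2 / 2) := add_one_le_exp _

variable {E : Type*} [NormedAddCommGroup E] [MeasurableSpace E] [BorelSpace E]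

theorem lintegral_ofReal_norm_pow_mul (μ : Measure E) {p : E → ℝ} (hp : AEMeasurable p μ) (n : ℕ) :
    ∫⁻ x, ENNReal.ofReal (‖x‖ ^ n * p x) ∂μ =
      ∫⁻ x, ‖x‖ₑ ^ n ∂μ.withDensity fun x => ENNReal.ofReal (p x) := by
  rw [lintegral_withDensity_eq_lintegral_mul₀ hp.ennreal_ofReal (by fun_prop)]
  exact lintegral_congr fun x => (ofReal_norm_pow_mul x n (p x)).trans (mul_comm _ _)

theorem lintegral_enorm_pow_map_smul_le [NormedSpace ℝ E] (μ : Measure E) {m : ℝ}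
    (hm : ‖m‖ₑ ≤ 1) (n : ℕ) :
    ∫⁻ a, ‖a‖ₑ ^ n ∂μ.map (m • ·) ≤ ∫⁻ x, ‖x‖ₑ ^ n ∂μ := by
  rw [lintegral_map (by fun_prop) (by fun_prop)]
  gcongr with x
  rw [enorm_smul]
  exact mul_le_of_le_one_left' hm

variable {H : Type*} [NormedAddCommGroup H] [InnerProductSpace ℝ H] [CompleteSpace H]

theorem hasGradientAt_log {f : H → ℝ} {f' x : H} (hf : HasGradientAt f f' x) (hx : f x ≠ 0) :
    HasGradientAt (fun y => log (f y)) ((f x)⁻¹ • f') x := by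
  rw [hasGradientAt_iff_hasFDerivAt] at hf ⊢
  simpa using hf.log hx

theorem hasGradientAt_integral_of_dominated_of_gradient_le {F : H → α → ℝ} {F' : H → α → H}
    {bound : α → ℝ} {x₀ : H} {s : Set H} (hs : s ∈ nhds x₀)
    (hF_meas : ∀ᶠ x in nhds x₀, AEStronglyMeasurable (F x) μ) (hF_int : Integrable (F x₀) μ)
    (hF'_meas : AEStronglyMeasurable (F' x₀) μ)
    (h_bound : ∀ᵐ a ∂μ, ∀ x ∈ s, ‖F' x a‖ ≤ bound a) (bound_integrable : Integrable bound μ)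
    (h_diff : ∀ᵐ a ∂μ, ∀ x ∈ s, HasGradientAt (F · a) (F' x a) x) :
    HasGradientAt (fun x => ∫ a, F x a ∂μ) (∫ a, F' x₀ a ∂μ) x₀ := by
  have hF'_int : Integrable (F' x₀) μ :=
    bound_integrable.mono' hF'_meas (h_bound.mono fun a ha => ha x₀ (mem_of_mem_nhds hs))
  have h := hasFDerivAt_integral_of_dominated_of_fderiv_le (𝕜 := ℝ)
    (F' := fun x a => innerSL ℝ (F' x a)) hs hF_meas hF_int
    ((innerSL ℝ).continuous.comp_aestronglyMeasurable hF'_meas)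
    (by simpa only [innerSL_apply_norm] using h_bound) bound_integrable
    (h_diff.mono fun a ha x hx => (ha x hx).hasFDerivAt)
  rw [(innerSL ℝ).integral_comp_comm hF'_int] at h
  exact hasGradientAt_iff_hasFDerivAt.2 h

end General

section GaussianKernel

variable {E : Type*} [NormedAddCommGroup E]

theorem integrable_exp_neg_norm_sub_sq [MeasurableSpace E] [BorelSpace E]
    [SecondCountableTopology E] (ν : Measure E) [IsFiniteMeasure ν] (s : ℝ) (y : E) :
    Integrable (fun a => exp (-‖y - a‖ ^ 2 / (2 * s ^ 2))) ν := by
  refine .of_bound (by fun_prop) 1 (.of_forall fun a => ?_)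
  rw [Real.norm_of_nonneg (exp_nonneg _), exp_le_one_iff, neg_div]
  exact neg_nonpos.2 (by positivity)

theorem norm_exp_neg_norm_sub_sq_smul_le [NormedSpace ℝ E] {s : ℝ} (hs : 0 < s) (a y : E) :
    ‖exp (-‖y - a‖ ^ 2 / (2 * s ^ 2)) • (s ^ 2)⁻¹ • (a - y)‖ ≤ s⁻¹ := by
  have hexp : -(‖y - a‖ / s) ^ 2 / 2 = -‖y - a‖ ^ 2 / (2 * s ^ 2) := by field_simp
  have h := mul_exp_neg_sq_div_two_le_one (‖y - a‖ / s)
  rw [hexp] at h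
  rw [norm_smul, norm_smul, norm_sub_rev a, Real.norm_of_nonneg (exp_nonneg _),
    Real.norm_of_nonneg (by positivity)]
  calc exp (-‖y - a‖ ^ 2 / (2 * s ^ 2)) * ((s ^ 2)⁻¹ * ‖y - a‖)
      = s⁻¹ * (‖y - a‖ / s * exp (-‖y - a‖ ^ 2 / (2 * s ^ 2))) := by field_simp
    _ ≤ s⁻¹ := mul_le_of_le_one_right (by positivity) h

theorem hasGradientAt_exp_neg_norm_sub_sq [InnerProductSpace ℝ E] [CompleteSpace E]
    (s : ℝ) (a y : E) :
    HasGradientAt (fun y => exp (-‖y - a‖ ^ 2 / (2 * s ^ 2)))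
      (exp (-‖y - a‖ ^ 2 / (2 * s ^ 2)) • (s ^ 2)⁻¹ • (a - y)) y := by
  have h := (((hasFDerivAt_id y).sub_const a).norm_sq.neg.mul_const (2 * s ^ 2)⁻¹).exp
  rw [hasGradientAt_iff_hasFDerivAt]
  refine h.congr_fderiv ?_
  ext v
  simp only [id_eq, Pi.neg_apply, mul_inv_rev, neg_mul, map_sub, ContinuousLinearMap.comp_id,
    smul_neg, neg_apply, smul_apply, sub_apply, coe_innerSL_apply, nsmul_eq_mul, Nat.cast_ofNat,
    smul_eq_mul, map_smul, InnerProductSpace.toDual_apply_apply]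
  ring_nf

end GaussianKernel

section Posterior

variable {E : Type*} [NormedAddCommGroup E] [MeasurableSpace E]

/-- The law of `A` given `A + s • Z = y`, when `A ∼ ν` and `Z` is an independent standard Gaussian.
As an exponential tilt of `ν` it does not mention the normalizing constant of the Gaussian. -/
def gaussianPosterior (ν : Measure E) (s : ℝ) (y : E) : Measure E :=
  ν.tilted fun a => -‖y - a‖ ^ 2 / (2 * s ^ 2)

variable [BorelSpace E] [SecondCountableTopology E] {ν : Measure E} [IsFiniteMeasure ν]

theorem isProbabilityMeasure_gaussianPosterior [NeZero ν] (s : ℝ) (y : E) :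
    IsProbabilityMeasure (gaussianPosterior ν s y) :=
  isProbabilityMeasure_tilted (integrable_exp_neg_norm_sub_sq ν s y)

theorem integrable_smul_sub_gaussianPosterior [NormedSpace ℝ E] {s : ℝ} (hs : 0 < s) (y : E) :
    Integrable (fun a => (s ^ 2)⁻¹ • (a - y)) (gaussianPosterior ν s y) := by
  rw [gaussianPosterior, integrable_tilted_iff (integrable_exp_neg_norm_sub_sq ν s y)]
  exact .of_bound (by fun_prop) s⁻¹ (.of_forall fun a => norm_exp_neg_norm_sub_sq_smul_le hs a y)

variable [InnerProductSpace ℝ E] [CompleteSpace E]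

theorem hasGradientAt_integral_exp_neg_norm_sub_sq {s : ℝ} (hs : 0 < s) (y : E) :
    HasGradientAt (fun y => ∫ a, exp (-‖y - a‖ ^ 2 / (2 * s ^ 2)) ∂ν)
      (∫ a, exp (-‖y - a‖ ^ 2 / (2 * s ^ 2)) • (s ^ 2)⁻¹ • (a - y) ∂ν) y :=
  hasGradientAt_integral_of_dominated_of_gradient_le
    (F' := fun y a => exp (-‖y - a‖ ^ 2 / (2 * s ^ 2)) • (s ^ 2)⁻¹ • (a - y))
    (bound := fun _ => s⁻¹)
    Filter.univ_mem
    (.of_forall fun y => (integrable_exp_neg_norm_sub_sq ν s y).aestronglyMeasurable)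
    (integrable_exp_neg_norm_sub_sq ν s y) (by fun_prop)
    (.of_forall fun a y _ => norm_exp_neg_norm_sub_sq_smul_le hs a y) (integrable_const _)
    (.of_forall fun a y _ => hasGradientAt_exp_neg_norm_sub_sq s a y)

theorem hasGradientAt_log_integral_exp_neg_norm_sub_sq [NeZero ν] {s : ℝ} (hs : 0 < s) (y : E) :
    HasGradientAt (fun y => log (∫ a, exp (-‖y - a‖ ^ 2 / (2 * s ^ 2)) ∂ν))
      (∫ a, (s ^ 2)⁻¹ • (a - y) ∂gaussianPosterior ν s y) y := by
  have hpos := integral_exp_pos (integrable_exp_neg_norm_sub_sq ν s y)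
  convert hasGradientAt_log (hasGradientAt_integral_exp_neg_norm_sub_sq hs y) hpos.ne' using 1
  rw [gaussianPosterior, integral_tilted, ← integral_smul]
  simp only [div_eq_inv_mul, mul_smul]

end Posterior

section GaussianSmoothing

variable {E : Type*} [NormedAddCommGroup E] [InnerProductSpace ℝ E]

/-- The density of the Gaussian `N(a, s² I)`; `s` is the standard deviation. -/
def isotropicGaussianPDF (a : E) (s : ℝ) (y : E) : ℝ :=
  (2 * π * s ^ 2) ^ (-(Module.finrank ℝ E : ℝ) / 2) * exp (-‖y - a‖ ^ 2 / (2 * s ^ 2))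

theorem isotropicGaussianPDF_nonneg (a : E) (s : ℝ) (y : E) : 0 ≤ isotropicGaussianPDF a s y := by
  unfold isotropicGaussianPDF
  positivity

theorem isotropicGaussianPDF_add_smul (a : E) {s : ℝ} (hs : 0 < s) (z : E) :
    isotropicGaussianPDF a s (a + s • z) =
      (s ^ Module.finrank ℝ E)⁻¹ * isotropicGaussianPDF 0 1 z := by
  have hconst : (2 * π * s ^ 2) ^ (-(Module.finrank ℝ E : ℝ) / 2) =
      (s ^ Module.finrank ℝ E)⁻¹ * (2 * π) ^ (-(Module.finrank ℝ E : ℝ) / 2) := by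
    rw [mul_rpow (by positivity) (by positivity), ← rpow_natCast s 2, ← rpow_mul hs.le, mul_comm,
      Nat.cast_ofNat, mul_div_cancel₀ _ two_ne_zero, rpow_neg hs.le, rpow_natCast]
  have hexp : -‖a + s • z - a‖ ^ 2 / (2 * s ^ 2) = -‖z‖ ^ 2 / 2 := by
    rw [add_sub_cancel_left, norm_smul, norm_of_nonneg hs.le]
    field_simp
  simp only [isotropicGaussianPDF, hexp, sub_zero, one_pow, mul_one]
  rw [hconst, mul_assoc]

variable [MeasurableSpace E]

/-- The density of `ν ∗ N(0, s² I)`, the law of `A + s • Z` for `A ∼ ν` and an independent standard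
Gaussian `Z`. -/
def gaussianSmoothing (ν : Measure E) (s : ℝ) (y : E) : ℝ :=
  ∫ a, isotropicGaussianPDF a s y ∂ν

theorem gaussianSmoothing_eq_mul_integral_exp (ν : Measure E) (s : ℝ) (y : E) :
    gaussianSmoothing ν s y = (2 * π * s ^ 2) ^ (-(Module.finrank ℝ E : ℝ) / 2) *
      ∫ a, exp (-‖y - a‖ ^ 2 / (2 * s ^ 2)) ∂ν :=
  integral_const_mul _ _

variable [BorelSpace E]

theorem lintegral_gaussianPosterior [SecondCountableTopology E] {ν : Measure E} [IsFiniteMeasure ν]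
    [NeZero ν] (s : ℝ) (y : E) {g : E → ℝ≥0∞} (hg : Measurable g) :
    (∫⁻ a, g a ∂gaussianPosterior ν s y) * ENNReal.ofReal (gaussianSmoothing ν s y) =
      ∫⁻ a, g a * ENNReal.ofReal (isotropicGaussianPDF a s y) ∂ν := by
  have hpos := integral_exp_pos (integrable_exp_neg_norm_sub_sq ν s y)
  rw [gaussianPosterior, lintegral_tilted, ← lintegral_mul_const _ (by fun_prop)]
  refine lintegral_congr fun a => ?_
  rw [mul_right_comm, mul_comm, ← ENNReal.ofReal_mul (by positivity),
    gaussianSmoothing_eq_mul_integral_exp, isotropicGaussianPDF, mul_left_comm,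
    div_mul_cancel₀ _ hpos.ne']

/-- **Tweedie's formula** -/
theorem gradient_log_gaussianSmoothing [CompleteSpace E] [SecondCountableTopology E]
    {ν : Measure E} [IsFiniteMeasure ν] [NeZero ν] {s : ℝ} (hs : 0 < s) (y : E) :
    gradient (fun y => log (gaussianSmoothing ν s y)) y =
      ∫ a, (s ^ 2)⁻¹ • (a - y) ∂gaussianPosterior ν s y := by
  have hlog : (fun y => log (gaussianSmoothing ν s y)) = fun y =>
      log ((2 * π * s ^ 2) ^ (-(Module.finrank ℝ E : ℝ) / 2)) +
        log (∫ a, exp (-‖y - a‖ ^ 2 / (2 * s ^ 2)) ∂ν) := by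
    ext y
    rw [gaussianSmoothing_eq_mul_integral_exp, log_mul (by positivity)
      (integral_exp_pos (integrable_exp_neg_norm_sub_sq ν s y)).ne']
  rw [hlog]
  exact HasGradientAt.gradient
    ((hasGradientAt_log_integral_exp_neg_norm_sub_sq hs y).hasFDerivAt.const_add _)

theorem enorm_score_add_smul_pow_mul_le [CompleteSpace E] [SecondCountableTopology E]
    {ν : Measure E} [IsFiniteMeasure ν] [NeZero ν] {s : ℝ} (hs : 0 < s) (r : ℝ) (n : ℕ) (y : E) :
    ‖gradient (fun y => log (gaussianSmoothing ν s y)) y + r • y‖ₑ ^ n *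
        ENNReal.ofReal (gaussianSmoothing ν s y) ≤
      ∫⁻ a, ‖(s ^ 2)⁻¹ • (a - y) + r • y‖ₑ ^ n *
        ENNReal.ofReal (isotropicGaussianPDF a s y) ∂ν := by
  have := isProbabilityMeasure_gaussianPosterior (ν := ν) s y
  have hint := integrable_smul_sub_gaussianPosterior (ν := ν) hs y
  have hmean : gradient (fun y => log (gaussianSmoothing ν s y)) y + r • y =
      ∫ a, ((s ^ 2)⁻¹ • (a - y) + r • y) ∂gaussianPosterior ν s y := by
    rw [gradient_log_gaussianSmoothing hs, integral_add hint (integrable_const _)]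
    simp
  rw [hmean, ← lintegral_gaussianPosterior s y (by fun_prop)]
  gcongr
  exact enorm_integral_pow_le_lintegral_enorm_pow (by fun_prop) n

variable [FiniteDimensional ℝ E]

/-- The Gaussian measure `N(a, s² I)`. It is given by its density, as in `stdGaussMeasure`, so that
the change of variables to `N(0, I)` stays elementary. -/
def isotropicGaussian (a : E) (s : ℝ) : Measure E :=
  volume.withDensity fun y => ENNReal.ofReal (isotropicGaussianPDF a s y)

@[fun_prop]
theorem measurable_isotropicGaussianPDF {α : Type*} [MeasurableSpace α] {f g : α → E}
    (hf : Measurable f) (hg : Measurable g) (s : ℝ) :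
    Measurable fun x => isotropicGaussianPDF (f x) s (g x) := by
  unfold isotropicGaussianPDF
  fun_prop

theorem lintegral_isotropicGaussian (a : E) (s : ℝ) {f : E → ℝ≥0∞} (hf : Measurable f) :
    ∫⁻ y, f y ∂isotropicGaussian a s =
      ∫⁻ y, f y * ENNReal.ofReal (isotropicGaussianPDF a s y) := by
  rw [isotropicGaussian, lintegral_withDensity_eq_lintegral_mul _ (by fun_prop) hf]
  exact lintegral_congr fun y => mul_comm _ _

theorem isProbabilityMeasure_isotropicGaussian (a : E) {s : ℝ} (hs : 0 < s) :
    IsProbabilityMeasure (isotropicGaussian a s) := by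
  refine isProbabilityMeasure_withDensity_ofReal_s17
    (.of_forall fun y => isotropicGaussianPDF_nonneg a s y) ?_
  have hgauss : ∫ y : E, exp (-‖y‖ ^ 2 / (2 * s ^ 2)) =
      (2 * π * s ^ 2) ^ ((Module.finrank ℝ E : ℝ) / 2) := by
    have h := GaussianFourier.integral_rexp_neg_mul_sq_norm (V := E) (b := (2 * s ^ 2)⁻¹)
      (by positivity)
    rw [div_inv_eq_mul, ← mul_assoc, mul_comm π] at h
    simpa only [neg_div, div_eq_inv_mul, neg_mul, mul_neg] using h
  simp only [isotropicGaussianPDF]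
  rw [integral_const_mul, integral_sub_right_eq_self (fun y => exp (-‖y‖ ^ 2 / (2 * s ^ 2))),
    hgauss, ← rpow_add (by positivity), neg_div, neg_add_cancel, rpow_zero]

theorem lintegral_comp_add_smul (f : E → ℝ≥0∞) (a : E) {s : ℝ} (hs : s ≠ 0) :
    ∫⁻ z, f (a + s • z) = ENNReal.ofReal |(s ^ Module.finrank ℝ E)⁻¹| * ∫⁻ y, f y := by
  rw [← (measurableEmbedding_const_smul₀ hs).lintegral_map (fun y => f (a + y)),
    Measure.map_addHaar_smul volume hs, lintegral_smul_measure, lintegral_add_left_eq_self,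
    smul_eq_mul]

theorem lintegral_isotropicGaussian_eq_lintegral_comp_add_smul (a : E) {s : ℝ} (hs : 0 < s)
    {f : E → ℝ≥0∞} (hf : Measurable f) :
    ∫⁻ y, f y ∂isotropicGaussian a s = ∫⁻ z, f (a + s • z) ∂isotropicGaussian 0 1 := by
  have hs0 : 0 < s ^ Module.finrank ℝ E := by positivity
  have hscale : ∫⁻ z, f (a + s • z) * ENNReal.ofReal (isotropicGaussianPDF a s (a + s • z)) =
      ENNReal.ofReal |(s ^ Module.finrank ℝ E)⁻¹| *
        ∫⁻ y, f y * ENNReal.ofReal (isotropicGaussianPDF a s y) :=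
    lintegral_comp_add_smul (fun y => f y * ENNReal.ofReal (isotropicGaussianPDF a s y)) a hs.ne'
  simp only [isotropicGaussianPDF_add_smul a hs, abs_of_pos (inv_pos.2 hs0),
    ENNReal.ofReal_mul (inv_pos.2 hs0).le, mul_left_comm (f _)] at hscale
  rw [lintegral_const_mul' _ _ ENNReal.ofReal_ne_top] at hscale
  rw [lintegral_isotropicGaussian _ _ hf, lintegral_isotropicGaussian _ _ (by fun_prop)]
  exact ((ENNReal.mul_right_inj (by simpa using hs0) ENNReal.ofReal_ne_top).1 hscale).symm

theorem lintegral_enorm_pow_isotropicGaussian_le (a : E) {s : ℝ} (hs : 0 < s) (r : ℝ) (n : ℕ) :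
    ∫⁻ y, ‖(s ^ 2)⁻¹ • (a - y) + r • y‖ₑ ^ n ∂isotropicGaussian a s ≤
      2 ^ (n - 1) * (‖r * s - s⁻¹‖ₑ ^ n * (∫⁻ z : E, ‖z‖ₑ ^ n ∂isotropicGaussian 0 1) +
        ‖r‖ₑ ^ n * ‖a‖ₑ ^ n) := by
  have := isProbabilityMeasure_isotropicGaussian (0 : E) one_pos
  have hsplit (z : E) : (s ^ 2)⁻¹ • (a - (a + s • z)) + r • (a + s • z) =
      (r * s - s⁻¹) • z + r • a := by
    match_scalars <;> field_simp <;> ring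
  calc ∫⁻ y, ‖(s ^ 2)⁻¹ • (a - y) + r • y‖ₑ ^ n ∂isotropicGaussian a s
      = ∫⁻ z, ‖(r * s - s⁻¹) • z + r • a‖ₑ ^ n ∂isotropicGaussian 0 1 := by
        rw [lintegral_isotropicGaussian_eq_lintegral_comp_add_smul a hs (by fun_prop)]
        simp only [hsplit]
    _ ≤ ∫⁻ z, 2 ^ (n - 1) * (‖r * s - s⁻¹‖ₑ ^ n * ‖z‖ₑ ^ n + ‖r‖ₑ ^ n * ‖a‖ₑ ^ n)
          ∂isotropicGaussian (0 : E) 1 := by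
        gcongr with z
        simpa only [enorm_smul, mul_pow] using enorm_add_pow_le ((r * s - s⁻¹) • z) (r • a) n
    _ = _ := by
        rw [lintegral_const_mul _ (by fun_prop), lintegral_add_right _ measurable_const,
          lintegral_const_mul _ (by fun_prop), lintegral_const, measure_univ, mul_one]

theorem lintegral_enorm_score_add_smul_pow_le (ν : Measure E) [IsProbabilityMeasure ν] {s : ℝ}
    (hs : 0 < s) (r : ℝ) (n : ℕ) :
    ∫⁻ y, ‖gradient (fun y => log (gaussianSmoothing ν s y)) y + r • y‖ₑ ^ n *
        ENNReal.ofReal (gaussianSmoothing ν s y) ≤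
      2 ^ (n - 1) * (‖r * s - s⁻¹‖ₑ ^ n * (∫⁻ z : E, ‖z‖ₑ ^ n ∂isotropicGaussian 0 1) +
        ‖r‖ₑ ^ n * ∫⁻ a, ‖a‖ₑ ^ n ∂ν) := by
  calc _ ≤ ∫⁻ y, ∫⁻ a, ‖(s ^ 2)⁻¹ • (a - y) + r • y‖ₑ ^ n *
          ENNReal.ofReal (isotropicGaussianPDF a s y) ∂ν :=
        lintegral_mono fun y => enorm_score_add_smul_pow_mul_le hs r n y
    _ = ∫⁻ a, ∫⁻ y, ‖(s ^ 2)⁻¹ • (a - y) + r • y‖ₑ ^ n ∂isotropicGaussian a s ∂ν := by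
        rw [lintegral_lintegral_swap (by fun_prop)]
        exact lintegral_congr fun a => (lintegral_isotropicGaussian a s (by fun_prop)).symm
    _ ≤ ∫⁻ a, 2 ^ (n - 1) * (‖r * s - s⁻¹‖ₑ ^ n * (∫⁻ z : E, ‖z‖ₑ ^ n ∂isotropicGaussian 0 1) +
          ‖r‖ₑ ^ n * ‖a‖ₑ ^ n) ∂ν :=
        lintegral_mono fun a => lintegral_enorm_pow_isotropicGaussian_le a hs r n
    _ = _ := by
        rw [lintegral_const_mul _ (by fun_prop), lintegral_add_left measurable_const,
          lintegral_const, lintegral_const_mul _ (by fun_prop), measure_univ, mul_one]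

end GaussianSmoothing

section ForwardProcess

theorem stdGaussMeasure_eq_isotropicGaussian (d : ℕ) :
    stdGaussMeasure d = isotropicGaussian 0 1 := by
  simp [stdGaussMeasure, isotropicGaussian, stdGaussDensity, isotropicGaussianPDF]

theorem forwardDensity_eq_gaussianSmoothing {d : ℕ} (σ2 : ℝ) (β : ℝ → ℝ) (t : ℝ)
    {p0 : EuclideanSpace ℝ (Fin d) → ℝ} (hp0 : ∀ x, 0 ≤ p0 x) (hp0_meas : AEMeasurable p0) :
    forwardDensity d σ2 β p0 t = gaussianSmoothing
      ((volume.withDensity fun x => ENNReal.ofReal (p0 x)).map (mcoef σ2 β t • ·))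
      (scoef σ2 β t) := by
  ext y
  rw [gaussianSmoothing, integral_map (by fun_prop)
      (by fun_prop : Measurable _).aestronglyMeasurable,
    integral_withDensity_eq_integral_toReal_smul₀ hp0_meas.ennreal_ofReal
      (.of_forall fun _ => ENNReal.ofReal_lt_top)]
  simp only [forwardDensity, isotropicGaussianPDF, finrank_euclideanSpace_fin,
    ENNReal.toReal_ofReal (hp0 _), smul_eq_mul, mul_comm (p0 _)]

variable {σ t : ℝ} {β : ℝ → ℝ}

theorem mcoef_lt_one (hσ : 0 < σ) (hβ : 0 < ∫ s in (0 : ℝ)..t, β s) : mcoef (σ ^ 2) β t < 1 := by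
  rw [mcoef, exp_lt_one_iff, neg_mul]
  exact neg_neg_of_pos (by positivity)

theorem mcoef_pos (σ2 : ℝ) (β : ℝ → ℝ) (t : ℝ) : 0 < mcoef σ2 β t := exp_pos _

theorem enorm_mcoef_le_one (hσ : 0 < σ) (hβ : 0 < ∫ s in (0 : ℝ)..t, β s) :
    ‖mcoef (σ ^ 2) β t‖ₑ ≤ 1 := by
  simpa [Real.enorm_of_nonneg (mcoef_pos _ β t).le] using (mcoef_lt_one hσ hβ).le

theorem mul_one_sub_mcoef_sq_pos (hσ : 0 < σ) (hβ : 0 < ∫ s in (0 : ℝ)..t, β s) :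
    0 < σ ^ 2 * (1 - mcoef (σ ^ 2) β t ^ 2) := by
  have := pow_lt_one₀ (mcoef_pos (σ ^ 2) β t).le (mcoef_lt_one hσ hβ) two_ne_zero
  exact mul_pos (by positivity) (by linarith)

theorem scoef_pos (hσ : 0 < σ) (hβ : 0 < ∫ s in (0 : ℝ)..t, β s) : 0 < scoef (σ ^ 2) β t :=
  sqrt_pos.2 (mul_one_sub_mcoef_sq_pos hσ hβ)

theorem scoef_sq (hσ : 0 < σ) (hβ : 0 < ∫ s in (0 : ℝ)..t, β s) :
    scoef (σ ^ 2) β t ^ 2 = σ ^ 2 * (1 - mcoef (σ ^ 2) β t ^ 2) :=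
  sq_sqrt (mul_one_sub_mcoef_sq_pos hσ hβ).le

theorem enorm_scoef_div_sub_inv_le (hσ : 0 < σ) (hβ : 0 < ∫ s in (0 : ℝ)..t, β s) :
    ‖1 / σ ^ 2 * scoef (σ ^ 2) β t - (scoef (σ ^ 2) β t)⁻¹‖ₑ ≤
      ENNReal.ofReal (1 / scoef (σ ^ 2) β t) := by
  have hs := scoef_pos hσ hβ
  have hdiff : 1 / σ ^ 2 * scoef (σ ^ 2) β t - (scoef (σ ^ 2) β t)⁻¹ =
      -(mcoef (σ ^ 2) β t ^ 2 / scoef (σ ^ 2) β t) := by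
    field_simp
    rw [scoef_sq hσ hβ]
    ring
  rw [hdiff, enorm_neg, Real.enorm_of_nonneg (by positivity)]
  gcongr
  exact pow_le_one₀ (mcoef_pos _ _ _).le (mcoef_lt_one hσ hβ).le

end ForwardProcess

theorem score_fourth_moment_bound_general {d : ℕ} (n : ℕ) {σ t : ℝ} {β : ℝ → ℝ} (hσ : 0 < σ)
    (hβ : 0 < ∫ s in (0 : ℝ)..t, β s) {p0 : EuclideanSpace ℝ (Fin d) → ℝ} (hp0 : ∀ x, 0 ≤ p0 x)
    (hp0_int : ∫ x, p0 x = 1) :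
    ∫⁻ x, ENNReal.ofReal
        (‖gradient (fun y => Real.log (forwardDensity d (σ ^ 2) β p0 t y)) x +
            (1 / σ ^ 2) • x‖ ^ n * forwardDensity d (σ ^ 2) β p0 t x) ≤
      ENNReal.ofReal (2 ^ (n - 1)) *
        (ENNReal.ofReal (1 / scoef (σ ^ 2) β t ^ n) *
            ∫⁻ z, ENNReal.ofReal (‖z‖ ^ n) ∂(stdGaussMeasure d) +
          ENNReal.ofReal (1 / σ ^ (2 * n)) *
            ∫⁻ x, ENNReal.ofReal (‖x‖ ^ n * p0 x)) := by
  have hp0_meas : AEMeasurable p0 :=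
    (Integrable.of_integral_ne_zero (by simp [hp0_int])).aemeasurable
  have := isProbabilityMeasure_withDensity_ofReal_s17 (.of_forall hp0) hp0_int
  have := Measure.isProbabilityMeasure_map (μ := volume.withDensity fun x => ENNReal.ofReal (p0 x))
    (f := fun x => mcoef (σ ^ 2) β t • x) (by fun_prop)
  have hs := scoef_pos hσ hβ
  have hr_pow : ENNReal.ofReal (1 / σ ^ (2 * n)) = ‖1 / σ ^ 2‖ₑ ^ n := by
    rw [Real.enorm_of_nonneg (by positivity), ← ENNReal.ofReal_pow (by positivity), one_div_pow,
      pow_mul]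
  have hs_pow : ENNReal.ofReal (1 / scoef (σ ^ 2) β t ^ n) =
      ENNReal.ofReal (1 / scoef (σ ^ 2) β t) ^ n := by
    rw [← ENNReal.ofReal_pow (by positivity), one_div_pow]
  rw [hr_pow, hs_pow, lintegral_ofReal_norm_pow_mul volume hp0_meas,
    stdGaussMeasure_eq_isotropicGaussian,
    forwardDensity_eq_gaussianSmoothing (σ ^ 2) β t hp0 hp0_meas]
  simp only [ofReal_norm_pow_mul, ENNReal.ofReal_pow (norm_nonneg _), ofReal_norm,
    ENNReal.ofReal_pow zero_le_two, ENNReal.ofReal_ofNat]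
  grw [lintegral_enorm_score_add_smul_pow_le _ hs, enorm_scoef_div_sub_inv_le hσ hβ,
    lintegral_enorm_pow_map_smul_le _ (enorm_mcoef_le_one hσ hβ)]

/-- a universal (dimension-free) fourth-moment bound for the modified score
`∇ log p̃_t = ∇ log p_t + x/σ²`:
`∫ ‖∇ log p_t + x/σ²‖⁴ p_t ≤ C (σ_t⁻⁴ ∫‖z‖⁴ dγ_d + σ⁻⁸ ∫‖x‖⁴ p₀)`. -/
theorem score_fourth_moment_bound :
    ∃ C : ℝ, 0 < C ∧
      ∀ (d : ℕ), 1 ≤ d → ∀ (σ T : ℝ), 0 < σ → 0 < T →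
        ∀ β : ℝ → ℝ, ContinuousOn β (Icc 0 T) → (∀ s ∈ Icc (0:ℝ) T, 0 < β s) →
          MonotoneOn β (Icc 0 T) →
        ∀ t ∈ Ioc (0:ℝ) T,
        ∀ p0 : EuclideanSpace ℝ (Fin d) → ℝ, Measurable p0 → (∀ x, 0 ≤ p0 x) →
          Integrable p0 → (∫ x, p0 x) = 1 →
          Integrable (fun x => ‖x‖ ^ 4 * p0 x) →
          ∫⁻ x, ENNReal.ofReal
              (‖gradient (fun y => Real.log (forwardDensity d (σ ^ 2) β p0 t y)) x +
                  (1 / σ ^ 2) • x‖ ^ 4 * forwardDensity d (σ ^ 2) β p0 t x) ≤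
            ENNReal.ofReal C *
              (ENNReal.ofReal (1 / scoef (σ ^ 2) β t ^ 4) *
                  ∫⁻ z, ENNReal.ofReal (‖z‖ ^ 4) ∂(stdGaussMeasure d) +
                ENNReal.ofReal (1 / σ ^ 8) *
                  ∫⁻ x, ENNReal.ofReal (‖x‖ ^ 4 * p0 x)) := by
  refine ⟨2 ^ 3, by positivity, fun d _ σ T hσ _ β hβ hβ_pos _ t ht p0 _ hp0 _ hp0_int _ => ?_⟩
  have hsub : Icc 0 t ⊆ Icc 0 T := Icc_subset_Icc_right ht.2
  exact score_fourth_moment_bound_general 4 hσ (intervalIntegral.intervalIntegral_pos_of_pos_on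
    ((hβ.mono hsub).intervalIntegrable_of_Icc ht.1.le)
    (fun s hs => hβ_pos s (hsub (Ioo_subset_Icc_self hs))) ht.1) hp0 hp0_int
end
end
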